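/- arXiv:1502.06706 — 9 statements merged into one kernel-verified Lean document; each statement's English description precedes it below -/
import Mathlib

section
/- The weight-to-root map is injective and is a right inverse of the root-to-weight map: if ρ_H(μ) = id_H for a character μ, then μ = ε; and for every character μ one has ε ∘ ρ_H(μ∘S) = μ (equivalently, ε composed with the inverse of the automorphism ρ_H(μ) equals μ). In particular, every character of H is of the form ε∘θ⁻¹ for some F-algebra automorphism θ of H. -/
/-!
For a character `φ` put `T φ h = Σ φ(h₍₁₎) • h₍₂₎`. This is an algebra endomorphism of `H`, and in the
convolution algebra `End(H)` it is the product `(η ∘ φ) * id`, with `η : F → H` the unit.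

Composing a convolution product with an algebra homomorphism distributes over the product, and
`T φ` fixes scalars; this gives `ε ∘ T φ = φ` (`counit_comp_leftTranslate`) and
`T φ ∘ T ψ = T (ψ * φ)`, used here when `ψ * φ` is trivial (`leftTranslate_comp_eq_id`).
The character `μ ∘ S` is a two-sided convolution inverse of `μ`. Hence `μ ∘ S ∘ S = μ`
(`character_antipode_antipode`), even where `S` is not an involution, and `T (μ ∘ S)`, `T μ` are
mutually inverse automorphisms.

Since `ρ_H(μ) = T (μ ∘ S)`, applying `ε` yields `ε ∘ ρ_H(μ) = μ ∘ S` and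
`ε ∘ ρ_H(μ ∘ S) = μ ∘ S ∘ S = μ`. If `ρ_H(μ) = id`, then `μ ∘ S = ε`, so `μ = μ ∘ S ∘ S = ε ∘ S = ε`.
-/

open TensorProduct

/-- The weight-to-root map: for a linear functional `φ : H → F` (typically a character),
`rho F φ` is the map `h ↦ Σ φ(S(h₍₁₎)) • h₍₂₎`. -/
noncomputable def rho (F : Type*) {H : Type*} [Field F] [Ring H] [HopfAlgebra F H]
    (φ : H →ₗ[F] F) : H →ₗ[F] H :=
  (TensorProduct.lid F H).toLinearMap ∘ₗ
    TensorProduct.map (φ ∘ₗ (HopfAlgebra.antipode (R := F) : H →ₗ[F] H)) LinearMap.id ∘ₗ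
    Coalgebra.comul

open HopfAlgebra WithConv

section

variable {F H : Type*} [Field F] [Ring H] [HopfAlgebra F H]

/-- The inverse character `μ ∘ S`. The antipode is only an anti-homomorphism; `μ ∘ S` is
multiplicative because `F` is commutative. -/
noncomputable def characterInv (μ : H →ₐ[F] F) : H →ₐ[F] F :=
  AlgHom.ofLinearMap (μ.toLinearMap ∘ₗ (antipode F : H →ₗ[F] H))
    (by simp)
    (fun a b => by simp [antipode_mul_antidistrib, mul_comm])

lemma toLinearMap_characterInv (μ : H →ₐ[F] F) :
    (characterInv μ).toLinearMap = μ.toLinearMap ∘ₗ (antipode F : H →ₗ[F] H) := rfl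

lemma characterInv_convMul (μ : H →ₐ[F] F) :
    toConv (characterInv μ).toLinearMap * toConv μ.toLinearMap = 1 := by
  have h := LinearMap.algHom_comp_convMul_distrib μ
    (toConv (antipode F : H →ₗ[F] H)) (toConv LinearMap.id)
  rw [LinearMap.antipode_mul_id] at h
  apply WithConv.ofConv_injective
  refine Eq.trans h.symm ?_
  ext x
  simp [LinearMap.convOne_def]

lemma convMul_characterInv (μ : H →ₐ[F] F) :
    toConv μ.toLinearMap * toConv (characterInv μ).toLinearMap = 1 := by
  have h := LinearMap.algHom_comp_convMul_distrib μ
    (toConv LinearMap.id) (toConv (antipode F : H →ₗ[F] H))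
  rw [LinearMap.id_mul_antipode] at h
  apply WithConv.ofConv_injective
  refine Eq.trans h.symm ?_
  ext x
  simp [LinearMap.convOne_def]

/-- Both sides are convolution inverses of `μ ∘ S`. -/
lemma character_antipode_antipode (μ : H →ₐ[F] F) :
    (characterInv (characterInv μ)).toLinearMap = μ.toLinearMap :=
  WithConv.toConv_injective <|
    left_inv_eq_right_inv (characterInv_convMul (characterInv μ)) (characterInv_convMul μ)

/-- The translation `h ↦ Σ φ(h₍₁₎) • h₍₂₎` of `H` by a character `φ`, as an algebra
endomorphism. -/
noncomputable def leftTranslate (φ : H →ₐ[F] F) : H →ₐ[F] H :=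
  (Algebra.TensorProduct.lid F H).toAlgHom.comp
    ((Algebra.TensorProduct.map φ (AlgHom.id F H)).comp (Bialgebra.comulAlgHom F H))

lemma rho_eq_leftTranslate (μ : H →ₐ[F] F) :
    rho F μ.toLinearMap = (leftTranslate (characterInv μ)).toLinearMap := rfl

/-- As an element of the convolution algebra `End(H)`, translation by `φ` is `(η ∘ φ) * id`. -/
lemma toConv_leftTranslate (φ : H →ₐ[F] F) :
    toConv (leftTranslate φ).toLinearMap =
      toConv (Algebra.linearMap F H ∘ₗ φ.toLinearMap) * toConv LinearMap.id := by
  apply WithConv.ofConv_injective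
  have h : (TensorProduct.lid F H).toLinearMap ∘ₗ TensorProduct.map φ.toLinearMap LinearMap.id =
      LinearMap.mul' F H ∘ₗ
        TensorProduct.map (Algebra.linearMap F H ∘ₗ φ.toLinearMap) LinearMap.id := by
    ext a b
    simp [Algebra.smul_def]
  exact congrArg (· ∘ₗ (Coalgebra.comul : H →ₗ[F] H ⊗[F] H)) h

lemma counit_comp_leftTranslate (φ : H →ₐ[F] F) :
    (Coalgebra.counit : H →ₗ[F] F) ∘ₗ (leftTranslate φ).toLinearMap = φ.toLinearMap := by
  have h := LinearMap.algHom_comp_convMul_distrib (Bialgebra.counitAlgHom F H)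
    (toConv (Algebra.linearMap F H ∘ₗ φ.toLinearMap)) (toConv LinearMap.id)
  rw [← toConv_leftTranslate] at h
  have h₁ : (Bialgebra.counitAlgHom F H).toLinearMap ∘ₗ Algebra.linearMap F H ∘ₗ φ.toLinearMap =
      φ.toLinearMap := by
    ext x
    simp
  have h₂ : toConv ((Bialgebra.counitAlgHom F H).toLinearMap ∘ₗ LinearMap.id) =
      (1 : WithConv (H →ₗ[F] F)) := rfl
  simp only [h₁] at h
  rw [h₂, mul_one] at h
  exact h

lemma leftTranslate_comp_eq_id (φ ψ : H →ₐ[F] F)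
    (hψφ : toConv ψ.toLinearMap * toConv φ.toLinearMap = 1) :
    (leftTranslate φ).comp (leftTranslate ψ) = AlgHom.id F H := by
  apply AlgHom.toLinearMap_injective
  have h := LinearMap.algHom_comp_convMul_distrib (leftTranslate φ)
    (toConv (Algebra.linearMap F H ∘ₗ ψ.toLinearMap)) (toConv LinearMap.id)
  rw [← toConv_leftTranslate] at h
  have h₁ : (leftTranslate φ).toLinearMap ∘ₗ Algebra.linearMap F H ∘ₗ ψ.toLinearMap =
      Algebra.linearMap F H ∘ₗ ψ.toLinearMap := by
    ext x
    simp
  -- `η` is an algebra homomorphism, so `(η ∘ ψ) * (η ∘ φ) = η ∘ (ψ * φ)`.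
  have h₂ : toConv (Algebra.linearMap F H ∘ₗ ψ.toLinearMap) *
      toConv (Algebra.linearMap F H ∘ₗ φ.toLinearMap) = 1 := by
    have h₃ := LinearMap.algHom_comp_convMul_distrib (Algebra.ofId F H)
      (toConv ψ.toLinearMap) (toConv φ.toLinearMap)
    rw [hψφ] at h₃
    exact WithConv.ofConv_injective h₃.symm
  simp only [h₁, LinearMap.comp_id] at h
  rw [toConv_leftTranslate φ, ← mul_assoc, h₂, one_mul] at h
  exact h

end

/-- The weight-to-root map is injective and is a right inverse of the root-to-weight map
`θ ↦ ε ∘ θ⁻¹`: if `ρ_H(μ) = id` then `μ = ε`; for every character `μ`, `ε ∘ ρ_H(μ∘S) = μ`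
(where `ρ_H(μ∘S)` is the inverse of the automorphism `ρ_H(μ)`); and in particular every
character of `H` has the form `ε ∘ θ⁻¹` for some `F`-algebra automorphism `θ` of `H`. -/
theorem rho_injective_rightInverse
    (F H : Type*) [Field F] [Ring H] [HopfAlgebra F H] (μ : H →ₐ[F] F) :
    (rho F μ.toLinearMap = LinearMap.id →
      μ.toLinearMap = (Coalgebra.counit : H →ₗ[F] F)) ∧
    ((Coalgebra.counit : H →ₗ[F] F) ∘ₗ
        rho F (μ.toLinearMap ∘ₗ (HopfAlgebra.antipode (R := F) : H →ₗ[F] H))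
      = μ.toLinearMap) ∧
    (∃ θ : H ≃ₐ[F] H, ∀ h : H, μ h = (Coalgebra.counit : H →ₗ[F] F) (θ.symm h)) := by
  have hρ : (Coalgebra.counit : H →ₗ[F] F) ∘ₗ rho F μ.toLinearMap =
      (characterInv μ).toLinearMap := by
    rw [rho_eq_leftTranslate, counit_comp_leftTranslate]
  refine ⟨fun h => ?_, ?_, ?_⟩
  · rw [h, LinearMap.comp_id] at hρ
    rw [← character_antipode_antipode μ, toLinearMap_characterInv (characterInv μ), ← hρ,
      counit_comp_antipode]
  · rw [← toLinearMap_characterInv, rho_eq_leftTranslate, counit_comp_leftTranslate,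
      character_antipode_antipode]
  · refine ⟨AlgEquiv.ofAlgHom (leftTranslate (characterInv μ)) (leftTranslate μ)
      (leftTranslate_comp_eq_id _ _ (convMul_characterInv μ))
      (leftTranslate_comp_eq_id _ _ (characterInv_convMul μ)), fun h => ?_⟩
    exact (LinearMap.congr_fun (counit_comp_leftTranslate μ) h).symm
end

section
/- For every character μ of H, the adjoint weight space A_μ := {a ∈ A : (ad h)(a) = μ(h)·a for all h ∈ H} coincides with the root space A_{ρ_H(μ)} := {a ∈ A : a·ι(h) = ι(ρ_H(μ)(h))·a for all h ∈ H}. In particular, taking μ = ε, the set {a ∈ A : (ad h)(a) = ε(h)·a for all h ∈ H} equals the centralizer of ι(H) in A. -/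
/-! The linear maps `H → A` form a ring under convolution, with unit `h ↦ ε(h) • 1`, and both
conditions on `a` are identities in that ring. Four kinds of elements occur:

* `i = ι` and `ι ∘ S`, which are mutually inverse;
* `m = (h ↦ μ(h) • 1)` and `n = (h ↦ μ(S h) • 1)`, which are mutually inverse as well;
* `â = (h ↦ ε(h) • a)`, for which `(f * â) h = f h * a` and `(â * f) h = a * f h`.

In these terms `ad(·)(a) = i * â * i⁻¹`, the map `h ↦ μ(h) • a` is `m * â`, and
`ι ∘ ρ_H(μ) = n * i = m⁻¹ * i`. Hence the weight condition reads `i * â * i⁻¹ = m * â`, the root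
condition reads `â * i = m⁻¹ * i * â`, and each follows from the other by multiplying by units.
For `μ = ε` the map `ρ_H(ε)` is the identity because `ε ∘ S = ε`, so the root condition says that
`a` commutes with `ι(H)`. -/

open TensorProduct

/-- The bilinear "sandwich" map `x ↦ y ↦ (a ↦ x * (a * y))` on an `F`-algebra `A`. -/
noncomputable def sandwich (F A : Type*) [Field F] [Ring A] [Algebra F A] :
    A →ₗ[F] A →ₗ[F] (A →ₗ[F] A) :=
  (LinearMap.lcomp F (A →ₗ[F] A) (LinearMap.mul F A).flip) ∘ₗ
    (LinearMap.llcomp F A A A ∘ₗ LinearMap.mul F A)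

/-- The adjoint action of a Hopf algebra `H` on an `F`-algebra `A` containing it via an algebra
map `ι : H → A`: `(ad h)(a) := Σ ι(h₍₁₎) · a · ι(S(h₍₂₎))`. -/
noncomputable def adAction (F : Type*) {H : Type*} (A : Type*) [Field F] [Ring H]
    [HopfAlgebra F H] [Ring A] [Algebra F A] (ι : H →ₐ[F] A) : H →ₗ[F] (A →ₗ[F] A) :=
  TensorProduct.lift (sandwich F A) ∘ₗ
    TensorProduct.map ι.toLinearMap
      (ι.toLinearMap ∘ₗ (HopfAlgebra.antipode (R := F) : H →ₗ[F] H)) ∘ₗ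
    Coalgebra.comul

open WithConv Coalgebra

section Convolution

variable {F H A : Type*} [Field F] [Ring H] [HopfAlgebra F H] [Ring A] [Algebra F A]

/-- The element `h ↦ ε(h) • a` of the convolution ring of linear maps `H → A`, written as
`h ↦ algebraMap (ε h) * a`. -/
noncomputable def convConst (F H : Type*) {A : Type*} [Field F] [Ring H] [HopfAlgebra F H]
    [Ring A] [Algebra F A] (a : A) : WithConv (H →ₗ[F] A) :=
  toConv (LinearMap.mulRight F a ∘ₗ (1 : WithConv (H →ₗ[F] A)).ofConv)

lemma convConst_apply (a : A) (h : H) :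
    convConst F H a h = algebraMap F A (counit (R := F) h) * a := rfl

lemma mul_convConst_apply (f : WithConv (H →ₗ[F] A)) (a : A) (h : H) :
    (f * convConst F H a) h = f h * a := by
  have key : (f * 1) h = f h := by rw [mul_one]
  rw [(ℛ F h).convMul_apply] at key ⊢
  rw [← key, Finset.sum_mul]
  simp only [convConst_apply, LinearMap.convOne_apply, mul_assoc]

lemma convConst_mul_apply (f : WithConv (H →ₗ[F] A)) (a : A) (h : H) :
    (convConst F H a * f) h = a * f h := by
  have key : (1 * f) h = f h := by rw [one_mul]
  rw [(ℛ F h).convMul_apply] at key ⊢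
  rw [← key, Finset.mul_sum]
  refine Finset.sum_congr rfl fun j _ => ?_
  rw [convConst_apply, LinearMap.convOne_apply, Algebra.commutes, mul_assoc]

/-- An algebra map out of a Hopf algebra has right convolution inverse its composite with `S`. -/
lemma conv_algHom_mul_antipode (g : H →ₐ[F] A) :
    toConv g.toLinearMap * toConv (g.toLinearMap ∘ₗ HopfAlgebra.antipode F) = 1 := by
  ext h
  rw [(ℛ F h).convMul_apply]
  simpa using congr(g $(HopfAlgebra.sum_mul_antipode_eq_algebraMap_counit (ℛ F h)))

/-- An algebra map out of a Hopf algebra has left convolution inverse its composite with `S`. -/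
lemma conv_antipode_mul_algHom (g : H →ₐ[F] A) :
    toConv (g.toLinearMap ∘ₗ HopfAlgebra.antipode F) * toConv g.toLinearMap = 1 := by
  ext h
  rw [(ℛ F h).convMul_apply]
  simpa using congr(g $(HopfAlgebra.sum_antipode_mul_eq_algebraMap_counit (ℛ F h)))

lemma adAction_eq_conv (ι : H →ₐ[F] A) (a : A) (h : H) :
    adAction F A ι h a = (toConv ι.toLinearMap * (convConst F H a *
      toConv (ι.toLinearMap ∘ₗ HopfAlgebra.antipode F))) h := by
  rw [(ℛ F h).convMul_apply]
  simp only [convConst_mul_apply]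
  simp [adAction, sandwich, ← (ℛ F h).eq]

lemma map_rho_eq_conv (ι : H →ₐ[F] A) (μ : H →ₐ[F] F) (h : H) :
    ι (rho F μ.toLinearMap h) =
      (toConv (((Algebra.ofId F A).comp μ).toLinearMap ∘ₗ HopfAlgebra.antipode F) *
        toConv ι.toLinearMap) h := by
  rw [(ℛ F h).convMul_apply]
  simp [rho, ← (ℛ F h).eq, Algebra.smul_def, Algebra.ofId_apply]

lemma rho_counit (h : H) : rho F (Bialgebra.counitAlgHom F H).toLinearMap h = h := by
  simp [rho, ← LinearMap.rTensor_def]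

/-- In a monoid, with `i`, `m` invertible with inverses `s`, `n`: the equations `i c s = m c` and
`c i = n i c` are equivalent. -/
lemma conj_eq_iff_mul_eq {M : Type*} [Monoid M] {i s m n c : M} (his : i * s = 1)
    (hsi : s * i = 1) (hmn : m * n = 1) (hnm : n * m = 1) :
    i * (c * s) = m * c ↔ c * i = n * i * c := by
  constructor
  · intro h
    calc c * i = n * m * c * i := by rw [hnm, one_mul]
      _ = n * (m * c) * i := by simp only [mul_assoc]
      _ = n * i * c * (s * i) := by rw [← h]; simp only [mul_assoc]
      _ = n * i * c := by rw [hsi, mul_one]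
  · intro h
    calc i * (c * s) = m * n * i * c * s := by rw [hmn, one_mul, mul_assoc]
      _ = m * (n * i * c) * s := by simp only [mul_assoc]
      _ = m * c * (i * s) := by rw [← h]; simp only [mul_assoc]
      _ = m * c := by rw [his, mul_one]

lemma weight_iff_root (ι : H →ₐ[F] A) (μ : H →ₐ[F] F) (a : A) :
    (∀ h : H, adAction F A ι h a = μ h • a) ↔
      ∀ h : H, a * ι h = ι (rho F μ.toLinearMap h) * a := by
  let g : H →ₐ[F] A := (Algebra.ofId F A).comp μ
  have key := conj_eq_iff_mul_eq (c := convConst F H a)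
    (conv_algHom_mul_antipode ι) (conv_antipode_mul_algHom ι)
    (conv_algHom_mul_antipode g) (conv_antipode_mul_algHom g)
  have hm (h : H) : μ h • a = (toConv g.toLinearMap * convConst F H a) h := by
    rw [mul_convConst_apply, Algebra.smul_def]; rfl
  have hr (h : H) : a * ι h = (convConst F H a * toConv ι.toLinearMap) h := by
    rw [convConst_mul_apply]; rfl
  simp only [adAction_eq_conv, hm, hr, map_rho_eq_conv, ← mul_convConst_apply]
  constructor
  · intro hw
    exact fun h => congr($(key.1 (WithConv.ext (LinearMap.ext hw))) h)
  · intro hw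
    exact fun h => congr($(key.2 (WithConv.ext (LinearMap.ext hw))) h)

end Convolution

/-- For every character `μ` of `H`, the adjoint weight space
`A_μ = {a : ∀ h, (ad h)(a) = μ(h) • a}` coincides with the root space
`A_{ρ_H(μ)} = {a : ∀ h, a·ι(h) = ι(ρ_H(μ)(h))·a}`; in particular (for `μ = ε`) the adjoint
invariants coincide with the centralizer of `ι(H)` in `A`. -/
theorem adjoint_weightSpace_eq_rootSpace (F H A : Type*) [Field F] [Ring H] [HopfAlgebra F H]
    [Ring A] [Algebra F A] (ι : H →ₐ[F] A) (μ : H →ₐ[F] F) :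
    (∀ a : A, (∀ h : H, adAction F A ι h a = μ h • a) ↔
      (∀ h : H, a * ι h = ι (rho F μ.toLinearMap h) * a)) ∧
    ({a : A | ∀ h : H, adAction F A ι h a = (Coalgebra.counit (R := F) h : F) • a}
      = {a : A | ∀ h : H, ι h * a = a * ι h}) := by
  refine ⟨weight_iff_root ι μ, ?_⟩
  ext a
  have key := weight_iff_root ι (Bialgebra.counitAlgHom F H) a
  simp only [rho_counit, Bialgebra.counitAlgHom_apply] at key
  exact key.trans (forall_congr' fun h => eq_comm)
end

section
/- Let (M_i)_{i∈I} be a family of left R-modules and S a simple left R-module. If S is a subquotient of the direct sum ⨁_{i∈I} M_i, then S is a subquotient of M_i for some i ∈ I. -/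
/-!
Let `f : N → S` be a surjection from a submodule `N` of `⨁ i, M i`. Some element `x` of `N` with
`f x ≠ 0` is supported on a finite set `s` of indices; take `s` minimal (here: induct on `s`) and
fix `i ∈ s`. On the submodule `K` of elements of `N` supported on `s`, the map `f` is nonzero, hence
onto because `S` is simple. An element of `K` whose `i`-th component vanishes is supported on
`s \ {i}`, so minimality puts it in the kernel of `f`. Thus `f` restricted to `K` factors through
the `i`-th projection `K → M i`, and `S` is a quotient of the image of that projection.
-/

open DirectSum

/-- `S` is a subquotient of `M` if `S ≅ N/N′` for submodules `N′ ⊆ N ⊆ M`. -/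
def IsSubquotient (R : Type*) [Ring R] (S M : Type*) [AddCommGroup S] [Module R S]
    [AddCommGroup M] [Module R M] : Prop :=
  ∃ N N' : Submodule R M, N' ≤ N ∧
    Nonempty (S ≃ₗ[R] (↥N ⧸ (N'.comap N.subtype)))

/-- If `f : K → S` is onto and factors through the image of `g : K → M`, then `S` is a subquotient
of `M`. -/
theorem isSubquotient_of_ker_le {R K S M : Type*} [Ring R] [AddCommGroup K] [Module R K]
    [AddCommGroup S] [Module R S] [AddCommGroup M] [Module R M]
    (f : K →ₗ[R] S) (g : K →ₗ[R] M) (hf : Function.Surjective f)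
    (hker : LinearMap.ker g ≤ LinearMap.ker f) : IsSubquotient R S M := by
  let h : LinearMap.range g →ₗ[R] S :=
    ((LinearMap.ker g).liftQ f hker).comp g.quotKerEquivRange.symm.toLinearMap
  have hh : Function.Surjective h := by
    intro s
    obtain ⟨k, rfl⟩ := hf s
    exact ⟨g.quotKerEquivRange ((LinearMap.ker g).mkQ k), by simp [h]⟩
  refine ⟨LinearMap.range g, (LinearMap.ker h).map (LinearMap.range g).subtype,
    Submodule.map_subtype_le _ _, ⟨?_⟩⟩
  have e : ((LinearMap.ker h).map (LinearMap.range g).subtype).comap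
      (LinearMap.range g).subtype = LinearMap.ker h :=
    Submodule.comap_map_eq_of_injective (Submodule.injective_subtype _) _
  exact ((Submodule.quotEquivOfEq _ _ e).trans (h.quotKerEquivOfSurjective hh)).symm

open Classical in
/-- The induction on a finite set `s` supporting an element on which `f` does not vanish. -/
theorem exists_isSubquotient_of_supported {R ι : Type*} [Ring R] {M : ι → Type*}
    [∀ i, AddCommGroup (M i)] [∀ i, Module R (M i)]
    {S : Type*} [AddCommGroup S] [Module R S] [IsSimpleModule R S]
    {N : Submodule R (⨁ i, M i)} (f : N →ₗ[R] S) (s : Finset ι) (x : N)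
    (hx : ∀ j ∉ s, (x : ⨁ i, M i) j = 0) (hfx : f x ≠ 0) :
    ∃ i, IsSubquotient R S (M i) := by
  induction s using Finset.induction_on generalizing x with
  | empty =>
    have : x = 0 := Subtype.ext (DFinsupp.ext fun j => hx j (Finset.notMem_empty j))
    exact absurd (by rw [this, map_zero]) hfx
  | insert i s _ ih =>
    by_cases hs : ∃ y : N, (∀ j ∉ s, (y : ⨁ i, M i) j = 0) ∧ f y ≠ 0
    · obtain ⟨y, hy, hfy⟩ := hs
      exact ih y hy hfy
    · push Not at hs
      let p (j : ι) : N →ₗ[R] M j := (DirectSum.component R ι M j).comp N.subtype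
      let K : Submodule R N := ⨅ j, ⨅ (_ : j ∉ insert i s), LinearMap.ker (p j)
      have hK (y : N) : y ∈ K ↔ ∀ j ∉ insert i s, (y : ⨁ i, M i) j = 0 := by
        simp only [K, Submodule.mem_iInf, LinearMap.mem_ker]
        rfl
      refine ⟨i, isSubquotient_of_ker_le (K := K) (f.domRestrict K) ((p i).domRestrict K) ?_ ?_⟩
      · refine LinearMap.surjective_of_ne_zero (M := K) (f := f.domRestrict K) ?_
        intro h0
        exact hfx (LinearMap.congr_fun h0 ⟨x, (hK x).2 hx⟩)
      · rintro ⟨y, hy⟩ hyi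
        refine hs y fun j hj => ?_
        by_cases hji : j = i
        · subst hji
          exact hyi
        · exact (hK y).1 hy j (by simp [hji, hj])

/-- A simple subquotient of a direct sum of modules is a subquotient of one of the summands. -/
theorem simple_subquotient_of_directSum (R ι : Type*) [Ring R] (M : ι → Type*)
    [∀ i, AddCommGroup (M i)] [∀ i, Module R (M i)]
    (S : Type*) [AddCommGroup S] [Module R S] [IsSimpleModule R S]
    (h : IsSubquotient R S (⨁ i, M i)) :
    ∃ i, IsSubquotient R S (M i) := by
  classical
  obtain ⟨N, N', -, ⟨e⟩⟩ := h
  have : Nontrivial S := IsSimpleModule.nontrivial R S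
  obtain ⟨t, ht⟩ := exists_ne (0 : S)
  obtain ⟨x, hx⟩ := Submodule.mkQ_surjective (N'.comap N.subtype) (e t)
  refine exists_isSubquotient_of_supported (e.symm.toLinearMap.comp (N'.comap N.subtype).mkQ)
    (DFinsupp.support (x : ⨁ i, M i)) x (fun j hj => DFinsupp.notMem_support_iff.1 hj) ?_
  rw [LinearMap.comp_apply, hx]
  simpa using ht
end

section
/- Let F be a field of characteristic zero, m ≥ 1, let p₁, …, p_m ∈ F[X] be nonzero polynomials, and let α₁, …, α_m ∈ F^× be such that α_i/α_j is not a root of unity whenever i ≠ j. Then the set of integers {n ∈ ℤ : Σ_{j=1}^m p_j(n)·α_jⁿ = 0} is finite, where α_jⁿ denotes the n-th power of the unit α_j for n ∈ ℤ, and p_j(n) denotes the evaluation of p_j at the image of n in F. -/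
/-!
The proof is the `p`-adic method of Skolem, Mahler and Lech.

The field generated by the finitely many bases and coefficients is countable, and it embeds into an
algebraic closure of `ℚ_[p]`, for a suitable prime `p`, in such a way that all bases `α j` acquire
norm `1` (`exists_padic_embedding`). Inside a finite extension `E` of `ℚ_[p]` containing the data,
compactness of the unit ball yields `N ≥ 1` such that all `α j ^ N` are close to `1`
(`exists_pow_near_one`). Then `n ↦ (α j ^ N) ^ n` is the restriction to `ℤ` of the analytic function
`z ↦ exp (z log (α j ^ N))` on the closed unit disc of `ℚ_[p]` (`exists_analytic_interpolation`).

If there were infinitely many zeros, infinitely many of them would lie in a single residue class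
modulo `N`. They accumulate in the compact unit disc, so by the identity theorem the sum vanishes on
a ball, hence on an arithmetic progression of integers (`vanish_on_progression`). On that progression
the sum is an exponential polynomial whose bases are powers `α j ^ (N * M)`; these are distinct
because no `α i / α j` is a root of unity, so linear independence (`exp_poly_independent`) forces all
the polynomials to vanish, a contradiction.
-/

namespace PolyExp

section

open Polynomial NormedSpace Filter Topology

/-! ### The `p`-adic exponential and interpolation of powers -/

/-- Since `v_p(n!) ≤ n`, the `p`-adic exponential series converges for `‖x‖ < p⁻¹`. -/
theorem padic_expSeries_radius_pos (p : ℕ) [hp : Fact p.Prime] (E : Type*) [NormedField E]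
    [NormedAlgebra ℚ_[p] E] : 0 < (expSeries ℚ_[p] E).radius := by
  have hp0 : (0 : ℝ) < p := by exact_mod_cast hp.1.pos
  have hle : (((p : NNReal)⁻¹ : NNReal) : ENNReal) ≤ (expSeries ℚ_[p] E).radius := by
    refine FormalMultilinearSeries.le_radius_of_bound _ 1 fun n => ?_
    rw [expSeries_eq_ofScalars, FormalMultilinearSeries.ofScalars_norm_eq_mul,
      ContinuousMultilinearMap.norm_mkPiAlgebraFin, mul_one, norm_inv,
      Padic.norm_eq_zpow_neg_valuation (by exact_mod_cast n.factorial_ne_zero),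
      Padic.valuation_natCast, zpow_neg, inv_inv, zpow_natCast]
    have hv : padicValNat p n.factorial ≤ n := by
      have h1 := sub_one_mul_padicValNat_factorial (p := p) n
      have h2 : 1 * padicValNat p n.factorial ≤ (p - 1) * padicValNat p n.factorial :=
        Nat.mul_le_mul_right _ (by have := hp.1.two_le; omega)
      omega
    have h3 : (p : ℝ) ^ padicValNat p n.factorial ≤ (p : ℝ) ^ n :=
      pow_le_pow_right₀ (by exact_mod_cast hp.1.one_le) hv
    calc _ ≤ (p : ℝ) ^ n * ((p : ℝ)⁻¹) ^ n := by
          push_cast; gcongr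
      _ = 1 := by rw [← mul_pow, mul_inv_cancel₀ hp0.ne', one_pow]
  refine lt_of_lt_of_le ?_ hle
  rw [ENNReal.coe_pos]
  have := hp.1.pos
  positivity

/-- Every element close enough to `1` is the exponential of an element of the disc of convergence:
the derivative of `exp` at `0` is the identity, so the inverse function theorem applies. -/
theorem exists_log_of_near_one (p : ℕ) [hp : Fact p.Prime] (E : Type*) [NormedField E]
    [NormedAlgebra ℚ_[p] E] [CompleteSpace E] :
    ∃ ε > 0, ∀ β : E, ‖β - 1‖ < ε →
      ∃ l ∈ Metric.eball (0 : E) (expSeries ℚ_[p] E).radius, exp l = β := by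
  have hr := padic_expSeries_radius_pos p E
  have hd : HasStrictFDerivAt (exp : E → E)
      ((ContinuousLinearEquiv.refl ℚ_[p] E : E ≃L[ℚ_[p]] E) : E →L[ℚ_[p]] E) 0 :=
    hasStrictFDerivAt_exp_zero_of_radius_pos hr
  have hm := hd.map_nhds_eq_of_equiv
  rw [exp_zero] at hm
  have h1 : exp '' (Metric.eball (0 : E) (expSeries ℚ_[p] E).radius) ∈ 𝓝 (1 : E) := by
    rw [← hm]
    exact image_mem_map (Metric.eball_mem_nhds _ hr)
  obtain ⟨ε, hε, hsub⟩ := Metric.mem_nhds_iff.1 h1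
  refine ⟨ε, hε, fun β hβ => ?_⟩
  obtain ⟨l, hl, rfl⟩ := hsub (show β ∈ Metric.ball 1 ε by simpa [dist_eq_norm] using hβ)
  exact ⟨l, hl, rfl⟩

/-- If `β` is close to `1`, then `n ↦ β ^ n` extends from `ℤ` to the function `z ↦ exp (z • log β)`,
analytic at every point of the closed unit disc of `ℚ_[p]`. -/
theorem exists_analytic_interpolation (p : ℕ) [hp : Fact p.Prime] (E : Type*) [NormedField E]
    [NormedAlgebra ℚ_[p] E] [CompleteSpace E] :
    ∃ ε > 0, ∀ β : E, β ≠ 0 → ‖β - 1‖ < ε → ∃ f : ℚ_[p] → E,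
      (∀ z, ‖z‖ ≤ 1 → AnalyticAt ℚ_[p] f z) ∧ ∀ n : ℤ, f n = β ^ n := by
  obtain ⟨ε, hε, h⟩ := exists_log_of_near_one p E
  refine ⟨ε, hε, fun β hβ0 hβ => ?_⟩
  obtain ⟨l, hl, rfl⟩ := h β hβ
  have hball : ∀ z : ℚ_[p], ‖z‖ ≤ 1 → z • l ∈ Metric.eball (0 : E) (expSeries ℚ_[p] E).radius := by
    intro z hz
    rw [mem_eball_zero_iff] at hl ⊢
    refine lt_of_le_of_lt ?_ hl
    rw [← ofReal_norm, ← ofReal_norm]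
    apply ENNReal.ofReal_le_ofReal
    rw [norm_smul]
    exact mul_le_of_le_one_left (norm_nonneg _) hz
  refine ⟨fun z => exp (z • l), fun z hz => ?_, ?_⟩
  · refine AnalyticAt.fun_comp (f := fun z : ℚ_[p] => z • l) ?_ ?_
    · exact analyticAt_exp_of_mem_ball _ (hball z hz)
    · exact analyticAt_id.smul analyticAt_const
  · have hstep : ∀ n : ℤ, exp (((n + 1 : ℤ) : ℚ_[p]) • l) = exp ((n : ℚ_[p]) • l) * exp l := by
      intro n
      rw [← exp_add_of_mem_ball (hball n (Padic.norm_int_le_one n)) hl]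
      push_cast
      rw [add_smul, one_smul]
    intro n
    change exp ((n : ℚ_[p]) • l) = _
    induction n using Int.induction_on with
    | zero => simp [exp_zero]
    | succ i ih =>
      rw [hstep, ih, zpow_add_one₀ hβ0]
    | pred i ih =>
      have h2 := hstep (-(i:ℤ) - 1)
      rw [sub_add_cancel, ih] at h2
      rw [zpow_sub_one₀ hβ0, h2, mul_assoc, mul_inv_cancel₀ hβ0, mul_one]

/-- An exponential polynomial with bases close to `1` and infinitely many integer zeros vanishes on a
whole arithmetic progression: the zeros accumulate in the compact disc `‖z‖ ≤ 1`, so the analytic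
interpolation vanishes on a `p`-adic ball, and such a ball around an integer contains a progression. -/
theorem vanish_on_progression (p : ℕ) [hp : Fact p.Prime] (E : Type*) [NormedField E]
    [NormedAlgebra ℚ_[p] E] [CompleteSpace E] :
    ∃ ε > 0, ∀ (m : ℕ) (β : Fin m → E) (q : Fin m → E[X]), (∀ j, β j ≠ 0) → 
      (∀ j, ‖β j - 1‖ < ε) → 
      {n : ℤ | ∑ j, (q j).eval (n : E) * β j ^ n = 0}.Infinite →
      ∃ (a : ℤ) (M : ℕ), 0 < M ∧ 
        ∀ k : ℤ, ∑ j, (q j).eval ((a + M * k : ℤ) : E) * β j ^ (a + M * k) = 0 := by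
  obtain ⟨ε, hε, h⟩ := exists_analytic_interpolation p E
  refine ⟨ε, hε, fun m β q hβ0 hβ hinf => ?_⟩
  choose f hf hfn using fun j => h (β j) (hβ0 j) (hβ j)
  set g : ℚ_[p] → E := fun z => ∑ j, aeval (algebraMap ℚ_[p] E z) (q j) * f j z with hg
  have hgn : ∀ n : ℤ, g n = ∑ j, (q j).eval (n : E) * β j ^ n := by
    intro n; simp [hg, hfn, coe_aeval_eq_eval]
  have hga : ∀ z, ‖z‖ ≤ 1 → AnalyticAt ℚ_[p] g z := by
    intro z hz
    refine Finset.analyticAt_fun_sum _ fun j _ => ?_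
    refine AnalyticAt.mul ?_ (hf j z hz)
    refine AnalyticAt.aeval_polynomial ?_ _
    exact (Algebra.linearMap ℚ_[p] E |>.mkContinuous 1 (by simp [norm_algebraMap'])).analyticAt z
  have hcomp : IsCompact (Metric.closedBall (0 : ℚ_[p]) 1) := isCompact_closedBall _ _
  have hinf' := hinf.image (f := fun n : ℤ => (n : ℚ_[p])) Int.cast_injective.injOn
  obtain ⟨z, hz, hacc⟩ := hinf'.exists_accPt_of_subset_isCompact hcomp (by
    rintro _ ⟨n, _, rfl⟩
    simpa using Padic.norm_int_le_one n)
  have hz1 : ‖z‖ ≤ 1 := by simpa using hz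
  have hfreq : ∃ᶠ w in 𝓝[{z}ᶜ] z, g w = 0 := by
    rw [accPt_iff_frequently_nhdsNE] at hacc
    refine hacc.mono ?_
    rintro _ ⟨n, hn, rfl⟩
    rw [hgn]; exact hn
  have hev := (hga z hz1).frequently_zero_iff_eventually_zero.1 hfreq
  obtain ⟨δ, hδ, hball⟩ := Metric.eventually_nhds_iff.1 hev
  rw [accPt_iff_frequently] at hacc
  obtain ⟨_, ⟨_, ⟨a, _, rfl⟩⟩, hw⟩ :=
    (hacc.and_eventually (Metric.ball_mem_nhds z hδ)).exists
  change dist (a : ℚ_[p]) z < δ at hw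
  obtain ⟨N, hN⟩ := exists_pow_lt_of_lt_one (sub_pos.2 hw)
    (inv_lt_one_of_one_lt₀ (by exact_mod_cast hp.1.one_lt : (1 : ℝ) < p))
  refine ⟨a, p ^ N, pow_pos hp.1.pos _, fun k => ?_⟩
  rw [← hgn]
  refine hball ?_
  have h1 : dist ((a + (p ^ N : ℕ) * k : ℤ) : ℚ_[p]) (a : ℚ_[p]) ≤ ((p : ℝ)⁻¹) ^ N := by
    rw [dist_eq_norm]
    push_cast
    rw [add_sub_cancel_left, norm_mul, norm_pow, Padic.norm_p]
    exact mul_le_of_le_one_right (by positivity) (Padic.norm_int_le_one k)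
  calc _ ≤ _ := dist_triangle _ (a : ℚ_[p]) _
    _ < δ := by linarith

/-! ### Linear independence of exponential polynomials -/

/-- The shift operator `f ↦ (k ↦ f (k + 1))` on sequences indexed by `ℕ`. -/
def seqShift (E : Type*) [Field E] : Module.End E (ℕ → E) where
  toFun f := fun k => f (k + 1)
  map_add' _ _ := rfl
  map_smul' _ _ := rfl

/-- The sequence `q(k) β ^ k` is a generalized eigenvector of the shift for the eigenvalue `β`: applying
`shift - β` amounts, up to the factor `β`, to replacing `q` by its forward difference. -/
theorem shift_sub_pow_apply {E : Type*} [Field E] (β : E) (q : E[X]) (d : ℕ)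
    (hd : q.natDegree < d) :
    ((seqShift E - algebraMap E _ β) ^ d) (fun k : ℕ => q.eval (k : E) * β ^ k) = 0 := by
  have key : ∀ (d : ℕ) (f : E → E), ((seqShift E - algebraMap E _ β) ^ d)
      (fun k : ℕ => f k * β ^ k) = fun k : ℕ => β ^ d * ((fwdDiff 1)^[d] f) k * β ^ k := by
    intro d
    induction d with
    | zero => intro f; simp
    | succ d ih =>
      intro f
      have h1 : (seqShift E - algebraMap E _ β) (fun k : ℕ => f k * β ^ k)
          = β • fun k : ℕ => (fwdDiff 1 f) k * β ^ k := by
        funext k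
        simp [seqShift, fwdDiff]
        ring
      rw [pow_succ, Module.End.mul_apply, h1, map_smul, ih]
      funext k
      simp
      ring
  have := key d (fun x => q.eval x)
  rw [this]
  have h2 := Polynomial.fwdDiff_iter_eq_zero_of_degree_lt hd
  funext k
  have h3 := congrFun h2 (k : E)
  simp at h3 ⊢
  left; right; exact h3

/-- Exponential polynomials with distinct nonzero bases are linearly independent, because generalized
eigenspaces of the shift for distinct eigenvalues are independent. -/
theorem exp_poly_independent {E : Type*} [Field E] [CharZero E] {m : ℕ} (β : Fin m → E)
    (hβ0 : ∀ j, β j ≠ 0) (hβ : Function.Injective β) (q : Fin m → E[X])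
    (h : ∀ k : ℕ, ∑ j, (q j).eval (k : E) * β j ^ k = 0) (j : Fin m) : q j = 0 := by
  have hind := ((seqShift E).independent_maxGenEigenspace).comp hβ
  have hmem : ∀ j, (fun k : ℕ => (q j).eval (k : E) * β j ^ k) ∈
      (seqShift E).maxGenEigenspace (β j) := by
    intro j
    rw [Module.End.mem_maxGenEigenspace]
    exact ⟨(q j).natDegree + 1, shift_sub_pow_apply _ _ _ (Nat.lt_succ_self _)⟩
  have h0 := (iSupIndep_iff_finsetSum_eq_zero_imp_eq_zero _).1 hind Finset.univ
    (fun j k => (q j).eval (k : E) * β j ^ k) (fun j _ => hmem j)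
    (by funext k; simpa using h k) j (Finset.mem_univ j)
  refine Polynomial.eq_zero_of_infinite_isRoot _ ?_
  refine (Set.infinite_range_of_injective (Nat.cast_injective (R := E))).mono ?_
  rintro _ ⟨k, rfl⟩
  have := congrFun h0 k
  simpa [hβ0 j] using this

/-! ### The local case -/

/-- The powers of a tuple of elements of norm `1` stay in a compact set, so two of them, `α ^ a` and
`α ^ b` with `a < b`, are close; then `α ^ (b - a)` is close to `1` in every coordinate. -/
theorem exists_pow_near_one {E : Type*} [NormedField E] [ProperSpace E] {m : ℕ} (α : Fin m → E)
    (hα : ∀ j, ‖α j‖ = 1) {ε : ℝ} (hε : 0 < ε) :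
    ∃ N : ℕ, 0 < N ∧ ∀ j, ‖α j ^ N - 1‖ < ε := by
  have hmem : ∀ n : ℕ, (fun j => α j ^ n) ∈ Metric.closedBall (0 : Fin m → E) 1 := by
    intro n
    rw [mem_closedBall_zero_iff, pi_norm_le_iff_of_nonneg zero_le_one]
    intro j; simp [hα]
  obtain ⟨x, _, φ, hφ, hlim⟩ := (isCompact_closedBall (0 : Fin m → E) 1).tendsto_subseq hmem
  obtain ⟨n, hn⟩ := Metric.cauchySeq_iff'.1 hlim.cauchySeq ε hε
  have hlt : φ n < φ (n + 1) := hφ (Nat.lt_succ_self n)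
  refine ⟨φ (n + 1) - φ n, by omega, fun j => ?_⟩
  have h1 := (dist_pi_lt_iff hε).1 (hn (n + 1) (Nat.le_succ n)) j
  rw [dist_eq_norm] at h1
  have h2 : α j ^ φ (n + 1) - α j ^ φ n = α j ^ φ n * (α j ^ (φ (n + 1) - φ n) - 1) := by
    rw [mul_sub, ← pow_add, mul_one]; congr 2; omega
  simpa [h2, hα] using h1

theorem comp_linear_ne_zero {E : Type*} [Field E] {q : E[X]} (hq : q ≠ 0) (a b : E) (hb : b ≠ 0) :
    q.comp (C a + C b * X) ≠ 0 := by
  intro h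
  rw [Polynomial.comp_eq_zero_iff] at h
  rcases h with h | ⟨_, h⟩
  · exact hq h
  · have := congrArg (fun r => r.coeff 1) h
    simp [coeff_C] at this
    exact hb this

/-- The theorem over a finite extension of `ℚ_[p]`, for bases of norm `1`. -/
theorem local_finite_zeros (p : ℕ) [hp : Fact p.Prime] (E : Type*) [NormedField E]
    [NormedAlgebra ℚ_[p] E] [FiniteDimensional ℚ_[p] E] (m : ℕ) (hm : 1 ≤ m) (q : Fin m → E[X])
    (hq : ∀ j, q j ≠ 0) (α : Fin m → E) (hα1 : ∀ j, ‖α j‖ = 1)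
    (hα : ∀ i j, i ≠ j → ∀ n : ℕ, 1 ≤ n → α i ^ n ≠ α j ^ n) :
    {n : ℤ | ∑ j, (q j).eval (n : E) * α j ^ n = 0}.Finite := by
  have : CompleteSpace E := FiniteDimensional.complete ℚ_[p] E
  have : ProperSpace E := FiniteDimensional.proper ℚ_[p] E
  have : CharZero E := charZero_of_injective_algebraMap (algebraMap ℚ_[p] E).injective
  have hα0 : ∀ j, α j ≠ 0 := fun j => by
    rw [← norm_ne_zero_iff, hα1]; exact one_ne_zero
  obtain ⟨ε, hε, hvan⟩ := vanish_on_progression p E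
  obtain ⟨N, hN, hαN⟩ := exists_pow_near_one α hα1 hε
  set Z := {n : ℤ | ∑ j, (q j).eval (n : E) * α j ^ n = 0} with hZ
  -- It suffices to treat each residue class modulo `N`, on which the bases become `α j ^ N`.
  have hfin : ∀ r : ℕ, {k : ℤ | (r + N * k : ℤ) ∈ Z}.Finite := by
    intro r
    by_contra hinf
    set q' : Fin m → E[X] := fun j => (q j).comp (C (r : E) + C (N : E) * X) * C (α j ^ r) with hq'
    have hq'0 : ∀ j, q' j ≠ 0 := fun j =>
      mul_ne_zero (comp_linear_ne_zero (hq j) _ _ (by exact_mod_cast hN.ne'))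
        (by simpa using fun h => absurd h (hα0 j))
    obtain ⟨a, M, hM, hav⟩ := hvan m (fun j => α j ^ N) q' (fun j => pow_ne_zero _ (hα0 j)) hαN (by
      convert hinf using 2
      ext k
      simp only [hZ, Set.mem_ofPred_eq, hq']
      refine Eq.congr_left (Finset.sum_congr rfl fun j _ => ?_)
      rw [zpow_add₀ (hα0 j), zpow_mul, zpow_natCast, zpow_natCast]
      simp
      ring)
    -- On the progression `a + M k` the bases are `α j ^ (N * M)`, still pairwise distinct.
    have h0 := exp_poly_independent (fun j => (α j ^ N) ^ M)
      (fun j => pow_ne_zero _ (pow_ne_zero _ (hα0 j)))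
      (fun i j hij => by
        by_contra hne
        simp only [← pow_mul] at hij
        exact hα i j hne (N * M) (Nat.mul_pos hN hM) hij)
      (fun j => (q' j).comp (C (a : E) + C (M : E) * X) * C ((α j ^ N) ^ a)) (by
        intro k
        rw [← hav k]
        refine Finset.sum_congr rfl fun j _ => ?_
        rw [zpow_add₀ (pow_ne_zero _ (hα0 j)), zpow_mul (α j ^ N) (M : ℤ)]
        simp
        ring) ⟨0, hm⟩
    exact mul_ne_zero (comp_linear_ne_zero (hq'0 _) _ _ (by exact_mod_cast hM.ne'))
        (by simpa using zpow_ne_zero _ (pow_ne_zero _ (hα0 _))) h0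
  refine (Set.Finite.biUnion (Finset.range N).finite_toSet fun r _ =>
    (hfin r).image fun k : ℤ => (r + N * k : ℤ)).subset ?_
  intro n hn
  have hN' : (0 : ℤ) < N := by exact_mod_cast hN
  have h1 := Int.emod_nonneg n hN'.ne'
  have h2 := Int.emod_lt_of_pos n hN'
  have h3 : (((n % N).toNat : ℤ) + N * (n / N)) = n := by
    rw [Int.toNat_of_nonneg h1]; exact Int.emod_add_mul_ediv n N
  simp only [Set.mem_iUnion]
  exact ⟨(n % N).toNat, by simp; omega, n / N, by
    change (((n % N).toNat : ℤ) + N * (n / N)) ∈ Z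
    rwa [h3], h3⟩

/-! ### Embedding into a `p`-adic field -/

/-- In an ultrametric field, an element integral over a ring of elements of norm at most `1` has norm
at most `1`. -/
theorem norm_le_one_of_isIntegral {R L : Type*} [CommRing R] [NormedField L] [IsUltrametricDist L]
    [Algebra R L] (hR : ∀ r : R, ‖algebraMap R L r‖ ≤ 1) {y : L} (hy : IsIntegral R y) :
    ‖y‖ ≤ 1 := by
  obtain ⟨f, hf, hfy⟩ := hy
  by_contra! hlt
  rw [hf.as_sum, eval₂_add, eval₂_finsetSum] at hfy
  simp only [eval₂_mul, eval₂_C, eval₂_pow, eval₂_X] at hfy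
  have h1 : ‖y‖ ^ f.natDegree = ‖∑ i ∈ Finset.range f.natDegree, algebraMap R L (f.coeff i) * y ^ i‖ := by
    rw [← norm_pow, eq_neg_of_add_eq_zero_left hfy, norm_neg]
  have h2 : ‖∑ i ∈ Finset.range f.natDegree, algebraMap R L (f.coeff i) * y ^ i‖
      < ‖y‖ ^ f.natDegree := by
    obtain ⟨i, hi, hle⟩ := IsUltrametricDist.exists_norm_finsetSum_le (Finset.range f.natDegree)
      fun i => algebraMap R L (f.coeff i) * y ^ i
    rcases (Finset.range f.natDegree).eq_empty_or_nonempty with he | hne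
    · rw [he, Finset.sum_empty, norm_zero]; positivity
    refine hle.trans_lt ?_
    rw [norm_mul, norm_pow]
    calc _ ≤ 1 * ‖y‖ ^ i := by gcongr; exact hR _
      _ < ‖y‖ ^ f.natDegree := by
        rw [one_mul]; exact pow_lt_pow_right₀ hlt (Finset.mem_range.1 (hi hne))
  exact h2.ne h1.symm

theorem padicInt_uncountable (p : ℕ) [Fact p.Prime] : Uncountable ℤ_[p] := by
  have h := cardinal_eq_of_mem_nhds ℚ_[p]
    (Metric.closedBall_mem_nhds (0 : ℚ_[p]) one_pos)
  have h2 := continuum_le_cardinal_of_nontriviallyNormedField ℚ_[p]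
  have h3 : (Metric.closedBall (0 : ℚ_[p]) 1) = {x | ‖x‖ ≤ 1} := by ext; simp
  rw [← h, h3] at h2
  rw [← Cardinal.aleph0_lt_mk_iff]
  exact Cardinal.aleph0_lt_continuum.trans_le h2

/-- `ℤ_[p]` is uncountable, so its transcendence degree over `ℤ` is infinite. -/
theorem exists_algebraicIndependent_padicInt (p : ℕ) [Fact p.Prime] (ι : Type*) [Countable ι] :
    ∃ u : ι → ℤ_[p], AlgebraicIndependent ℤ u := by
  obtain ⟨s, hs⟩ := exists_isTranscendenceBasis ℤ ℤ_[p]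
  have hinf : Infinite s := by
    by_contra hfin
    rw [not_infinite_iff_finite] at hfin
    have : Countable (MvPolynomial s ℤ) := by
      rw [← Cardinal.mk_le_aleph0_iff]
      refine MvPolynomial.cardinalMk_le_max.trans ?_
      simp
    have : Countable (Algebra.adjoin ℤ (Set.range ((↑) : s → ℤ_[p]))) :=
      hs.1.aevalEquiv.symm.toEquiv.injective.countable
    have := hs.isAlgebraic
    have h1 := Algebra.IsAlgebraic.cardinalMk_le_max
      (Algebra.adjoin ℤ (Set.range ((↑) : s → ℤ_[p]))) ℤ_[p]
    have h2 := Cardinal.aleph0_lt_mk_iff.2 (padicInt_uncountable p)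
    refine absurd (h2.trans_le h1) ?_
    exact not_lt.2 (max_le Cardinal.mk_le_aleph0 le_rfl)
  obtain ⟨e⟩ : Nonempty (ι ↪ s) := by
    rw [← Cardinal.lift_mk_le']
    exact (Cardinal.lift_le_aleph0.2 Cardinal.mk_le_aleph0).trans
      (Cardinal.aleph0_le_lift.2 (Cardinal.aleph0_le_mk s))
  exact ⟨fun i => e i, hs.1.comp e e.injective⟩

/-- Given finitely many elements of a countable field `K` of characteristic zero, some embedding of `K`
into an algebraic closure of some `ℚ_[p]` maps all of them to elements of norm at most `1`.

For a transcendence basis `t` of `K`, some nonzero integer polynomial `ℓ` in `t` makes the given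
elements integral over `ℤ[t]` after multiplication. Pick an integer point `x` with `ℓ(x) ≠ 0` and a
prime `p` not dividing `ℓ(x)`, and send `t` to algebraically independent `p`-adic integers congruent
to `x` modulo `p`; then `ℓ` is sent to a unit. -/
theorem exists_padic_embedding (K : Type*) [Field K] [CharZero K] [Countable K] (S : Finset K) :
    ∃ (p : ℕ) (_ : Fact p.Prime) (φ : K →+* PadicAlgCl p), ∀ s ∈ S, ‖φ s‖ ≤ 1 := by
  obtain ⟨ι, t, ht⟩ := exists_isTranscendenceBasis' ℤ K
  have : Countable ι := ht.1.injective.countable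
  let algK : Algebra (MvPolynomial ι ℤ) K := (MvPolynomial.aeval t).toRingHom.toAlgebra
  have hKinj : Function.Injective (algebraMap (MvPolynomial ι ℤ) K) := ht.1
  have hKalg : Algebra.IsAlgebraic (MvPolynomial ι ℤ) K := by
    have := ht.isAlgebraic
    refine Algebra.IsAlgebraic.of_ringHom_of_comp_eq ht.1.aevalEquiv.toRingEquiv (RingHom.id K)
       (EquivLike.surjective _) Function.injective_id ?_
    ext x <;> simp [algK, RingHom.algebraMap_toAlgebra]
  have : Module.IsTorsionFree (MvPolynomial ι ℤ) K :=
    Module.isTorsionFree_iff_algebraMap_injective.2 hKinj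
  choose y hy0 hy using fun s : K => (hKalg.isAlgebraic s).exists_integral_multiple
  obtain ⟨x, hx⟩ : ∃ x : ι → ℤ, MvPolynomial.eval x (∏ s ∈ S, y s) ≠ 0 := by
    by_contra! h
    exact Finset.prod_ne_zero_iff.2 (fun s _ => hy0 s)
      (MvPolynomial.funext fun x => (h x).trans (map_zero _).symm)
  obtain ⟨p, hpgt, hp⟩ := Nat.exists_infinite_primes ((MvPolynomial.eval x (∏ s ∈ S, y s)).natAbs + 1)
  have : Fact p.Prime := ⟨hp⟩
  obtain ⟨u, hu⟩ := exists_algebraicIndependent_padicInt p ι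
  have hτ := hu.polynomial_aeval_of_transcendental (f := fun i => C (p : ℤ) * X + C (x i)) (by
    intro i
    have hp0 : (p : ℤ) ≠ 0 := by exact_mod_cast hp.ne_zero
    refine Polynomial.transcendental _ ?_ ?_
    · rw [natDegree_linear hp0]; exact one_ne_zero
    · rw [leadingCoeff_linear hp0]; exact mem_nonZeroDivisors_of_ne_zero hp0)
  set τ : ι → ℤ_[p] := fun i => aeval (u i) (C (p : ℤ) * X + C (x i)) with hτdef
  set ψ : MvPolynomial ι ℤ →+* ℤ_[p] := (MvPolynomial.aeval τ).toRingHom with hψ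
  have hψinj : Function.Injective ψ := hτ
  have hψmod : ∀ r, PadicInt.toZMod (ψ r) = ((MvPolynomial.eval x r : ℤ) : ZMod p) := by
    intro r
    have : (PadicInt.toZMod.comp ψ) = (Int.castRingHom (ZMod p)).comp (MvPolynomial.eval x) := by
      refine MvPolynomial.ringHom_ext (fun z => by simp) fun i => ?_
      have h : ψ (MvPolynomial.X i) = τ i := MvPolynomial.aeval_X τ i
      rw [RingHom.comp_apply, h]
      simp [hτdef]
    exact congrArg (fun f => f r) this
  let algL : Algebra (MvPolynomial ι ℤ) (PadicAlgCl p) :=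
    (((algebraMap ℚ_[p] (PadicAlgCl p)).comp (PadicInt.Coe.ringHom)).comp ψ).toAlgebra
  have hLapply : ∀ r, algebraMap (MvPolynomial ι ℤ) (PadicAlgCl p) r
    = algebraMap ℚ_[p] (PadicAlgCl p) (ψ r : ℚ_[p]) := fun r => rfl
  have hLinj : Function.Injective (algebraMap (MvPolynomial ι ℤ) (PadicAlgCl p)) := by
    refine (algebraMap ℚ_[p] (PadicAlgCl p)).injective.comp (Subtype.val_injective.comp hψinj)
  have hLnorm : ∀ r, ‖algebraMap (MvPolynomial ι ℤ) (PadicAlgCl p) r‖ = ‖ψ r‖ := fun r => by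
    rw [hLapply, norm_algebraMap']; rfl
  have : Module.IsTorsionFree (MvPolynomial ι ℤ) (PadicAlgCl p) :=
    Module.isTorsionFree_iff_algebraMap_injective.2 hLinj
  -- `K` is algebraic over `ℤ[t]`, so the embedding of `ℤ[t]` extends to `K`.
  let φ : K →ₐ[MvPolynomial ι ℤ] PadicAlgCl p := IsAlgClosed.lift
  refine ⟨p, ‹_›, φ, fun s hs => ?_⟩
  have h1 := norm_le_one_of_isIntegral (fun r => (hLnorm r).trans_le (PadicInt.norm_le_one _))
    ((hy s).map φ)
  have h2 : ‖ψ (y s)‖ = 1 := by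
    refine le_antisymm (PadicInt.norm_le_one _) (not_lt.1 fun hlt => ?_)
    have hker : ψ (y s) ∈ RingHom.ker (PadicInt.toZMod (p := p)) := by
      rw [PadicInt.ker_toZMod]
      exact PadicInt.mem_nonunits.2 hlt
    rw [RingHom.mem_ker, hψmod, ZMod.intCast_zmod_eq_zero_iff_dvd] at hker
    have hdvd : (p : ℤ) ∣ MvPolynomial.eval x (∏ s ∈ S, y s) :=
      hker.trans (map_dvd _ (Finset.dvd_prod_of_mem y hs))
    have := Int.natAbs_dvd_natAbs.2 hdvd
    have := Nat.le_of_dvd (Int.natAbs_pos.2 hx) this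
    rw [Int.natAbs_natCast] at this
    omega
  rw [Algebra.smul_def, map_mul, φ.commutes, norm_mul, hLnorm, h2, one_mul] at h1
  exact h1

/-! ### Transfer along field embeddings -/

/-- The set of integer zeros does not change under a field embedding. -/
theorem zeros_map_eq {K F : Type*} [Field K] [Field F] (f : K →+* F) {m : ℕ} (q : Fin m → K[X])
    (a : Fin m → K) :
    {n : ℤ | ∑ j, ((q j).map f).eval (n : F) * f (a j) ^ n = 0} =
      {n : ℤ | ∑ j, (q j).eval (n : K) * a j ^ n = 0} := by
  ext n
  simp only [Set.mem_ofPred_eq]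
  rw [← map_eq_zero f, map_sum]
  refine Eq.congr_left (Finset.sum_congr rfl fun j _ => ?_)
  rw [map_mul, map_zpow₀, ← map_intCast f n, Polynomial.eval_map_apply]

/-- The set of bases `α j` and of nonzero coefficients of the polynomials `q j`. -/
noncomputable def dataSet {F : Type*} [Field F] {m : ℕ} (q : Fin m → F[X]) (α : Fin m → F) : Set F :=
  (⋃ j, ((q j).coeffs : Set F)) ∪ Set.range α

theorem dataSet_finite {F : Type*} [Field F] {m : ℕ} (q : Fin m → F[X]) (α : Fin m → F) :
    (dataSet q α).Finite :=
  (Set.finite_iUnion fun _ => Finset.finite_toSet _).union (Set.finite_range _)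

/-- Polynomials and bases descend along `f` as soon as `range f` contains the bases and the
coefficients. -/
theorem exists_lift {K F : Type*} [Field K] [Field F] (f : K →+* F) {m : ℕ} (q : Fin m → F[X])
    (α : Fin m → F) (h : dataSet q α ⊆ Set.range f) :
    ∃ (q' : Fin m → K[X]) (a : Fin m → K), (∀ j, (q' j).map f = q j) ∧ ∀ j, f (a j) = α j := by
  have hq : ∀ j, q j ∈ Polynomial.lifts f := fun j => by
    rw [Polynomial.lifts_iff_coeff_lifts]
    intro n
    by_cases hn : (q j).coeff n = 0
    · exact ⟨0, by rw [map_zero, hn]⟩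
    · exact h (Or.inl (Set.mem_iUnion.2 ⟨j, Polynomial.coeff_mem_coeffs hn⟩))
  choose q' hq' using fun j => (Polynomial.mem_lifts _).1 (hq j)
  choose a ha using fun j => h (Or.inr ⟨j, rfl⟩ : α j ∈ dataSet q α)
  exact ⟨q', a, hq', ha⟩

/-- The theorem over an algebraic closure of `ℚ_[p]`, for bases of norm `1`: all the data live in a
finite extension of `ℚ_[p]`. -/
theorem padicAlgCl_finite_zeros (p : ℕ) [hp : Fact p.Prime] (m : ℕ) (hm : 1 ≤ m)
    (q : Fin m → (PadicAlgCl p)[X]) (hq : ∀ j, q j ≠ 0) (α : Fin m → PadicAlgCl p)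
    (hα1 : ∀ j, ‖α j‖ = 1) (hα : ∀ i j, i ≠ j → ∀ n : ℕ, 1 ≤ n → α i ^ n ≠ α j ^ n) :
    {n : ℤ | ∑ j, (q j).eval (n : PadicAlgCl p) * α j ^ n = 0}.Finite := by
  set E := IntermediateField.adjoin ℚ_[p] (dataSet q α) with hE
  have : Finite (dataSet q α) := dataSet_finite q α
  have : FiniteDimensional ℚ_[p] E :=
    IntermediateField.finiteDimensional_adjoin fun x _ => Algebra.IsIntegral.isIntegral x
  obtain ⟨q', a, hq', ha⟩ := exists_lift E.val.toRingHom q α fun x hx =>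
    ⟨⟨x, IntermediateField.subset_adjoin _ _ hx⟩, rfl⟩
  simp only [← hq', ← ha]
  rw [zeros_map_eq]
  refine local_finite_zeros p E m hm q' (fun j h => hq j (by rw [← hq', h, Polynomial.map_zero])) a
    (fun j => by rw [← hα1 j, ← ha]; rfl) ?_
  intro i j hij n hn h
  refine hα i j hij n hn ?_
  rw [← ha, ← ha, ← map_pow, ← map_pow, h]

theorem countable_finite_zeros (K : Type*) [Field K] [CharZero K] [Countable K] (m : ℕ)
    (hm : 1 ≤ m) (q : Fin m → K[X]) (hq : ∀ j, q j ≠ 0) (α : Fin m → K) (hα0 : ∀ j, α j ≠ 0)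
    (hα : ∀ i j, i ≠ j → ∀ n : ℕ, 1 ≤ n → α i ^ n ≠ α j ^ n) :
    {n : ℤ | ∑ j, (q j).eval (n : K) * α j ^ n = 0}.Finite := by
  classical
  obtain ⟨p, hp, φ, hφ⟩ := exists_padic_embedding K
    (Finset.univ.image α ∪ Finset.univ.image fun j => (α j)⁻¹)
  rw [← zeros_map_eq φ]
  refine padicAlgCl_finite_zeros p m hm _
    (fun j => (Polynomial.map_ne_zero_iff φ.injective).2 (hq j)) _ (fun j => ?_) ?_
  · have h1 := hφ (α j) (by simp)
    have h2 := hφ (α j)⁻¹ (by simp)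
    rw [map_inv₀, norm_inv] at h2
    have h3 : 0 < ‖φ (α j)‖ := norm_pos_iff.2 ((map_ne_zero φ).2 (hα0 j))
    exact le_antisymm h1 ((inv_le_one₀ h3).1 h2)
  · intro i j hij n hn h
    rw [← map_pow, ← map_pow] at h
    exact hα i j hij n hn (φ.injective h)

end

end PolyExp

open PolyExp

/-- Schlickewei's finiteness theorem for polynomial-exponential equations, over an arbitrary
field of characteristic zero: if `p₁, …, p_m` are nonzero polynomials and `α₁, …, α_m` are
units such that `α_i / α_j` is not a root of unity for `i ≠ j`, then
`Σ_j p_j(n) α_jⁿ = 0` has only finitely many integer solutions `n`. -/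
theorem polyExp_finite_zeros (F : Type*) [Field F] [CharZero F] (m : ℕ) (hm : 1 ≤ m)
    (p : Fin m → Polynomial F) (hp : ∀ j, p j ≠ 0)
    (α : Fin m → Fˣ)
    (hα : ∀ i j, i ≠ j → ∀ n : ℕ, 1 ≤ n → (α i / α j) ^ n ≠ 1) :
    {n : ℤ | ∑ j, Polynomial.eval (n : F) (p j) * ((α j ^ n : Fˣ) : F) = 0}.Finite := by
  simp only [Units.val_zpow_eq_zpow_val]
  set K := Subfield.closure (dataSet p fun j => (α j : F)) with hK
  have : Countable K := by
    have : Countable (dataSet p fun j => (α j : F)) := (dataSet_finite _ _).countable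
    rw [← Cardinal.mk_le_aleph0_iff]
    exact (Subfield.cardinalMk_closure_le_max _).trans (max_le Cardinal.mk_le_aleph0 le_rfl)
  obtain ⟨q, a, hq, ha⟩ := exists_lift K.subtype p (fun j => (α j : F)) fun x hx =>
    ⟨⟨x, Subfield.subset_closure hx⟩, rfl⟩
  simp only [← hq, ← ha]
  rw [zeros_map_eq]
  refine countable_finite_zeros K m hm q (fun j h => hp j (by rw [← hq, h, Polynomial.map_zero])) a
    (fun j h => (α j).ne_zero (by rw [← ha, h, map_zero])) ?_
  intro i j hij n hn h
  refine hα i j hij n hn ?_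
  rw [div_pow, div_eq_one]
  ext
  rw [Units.val_pow_eq_pow_val, Units.val_pow_eq_pow_val, ← ha, ← ha, ← map_pow, ← map_pow, h]
end

section
/- The set of points with free orbit, {a ∈ F : φⁿ(a) ≠ a for every integer n ≥ 1}, equals: F \ {r⁻¹γ/(1 − r⁻¹)} if r is not a root of unity; all of F if r = 1, γ ≠ 0 and char F = 0; and the empty set in all remaining cases (i.e. when r is a root of unity different from 1, or r = 1 with γ = 0, or r = 1 with char F > 0). -/
/-!
For `r ≠ 1` the map `φ(a) = r⁻¹(a + γ)` is the homothety of ratio `r⁻¹` about its unique fixed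
point `c = r⁻¹γ/(1 - r⁻¹)`, so `φⁿ(a) = a` iff `a = c` or `rⁿ = 1` (`iterate_eq_self_iff`).
For `r = 1` it is the translation by `γ`, so `φⁿ(a) = a` iff `nγ = 0` (`iterate_translation`),
and such an `n ≥ 1` exists unless `γ ≠ 0` and `F` has characteristic zero.
-/

theorem iterate_translation {F : Type*} [Field F] (γ a : F) (n : ℕ) :
    (fun x : F => (1 : F)⁻¹ * (x + γ))^[n] a = a + n * γ := by
  induction n with
  | zero => simp
  | succ n ih =>
    rw [Function.iterate_succ_apply', ih]
    push_cast
    ring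

/-- Iterates of the affine map, written as a homothety about its fixed point. -/
theorem iterate_homothety {F : Type*} [Field F] {r : F} (γ : F) (h1 : r ≠ 1)
    (a : F) (n : ℕ) :
    (fun x : F => r⁻¹ * (x + γ))^[n] a =
      r⁻¹ * γ / (1 - r⁻¹) + r⁻¹ ^ n * (a - r⁻¹ * γ / (1 - r⁻¹)) := by
  have h : (1 - r⁻¹) ≠ 0 := sub_ne_zero.mpr fun h => h1 (inv_eq_one.mp h.symm)
  obtain ⟨c, hc⟩ : ∃ c, c = r⁻¹ * γ / (1 - r⁻¹) := ⟨_, rfl⟩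
  have hfix : c * (1 - r⁻¹) = r⁻¹ * γ := by rw [hc, div_mul_cancel₀ _ h]
  rw [← hc]
  induction n with
  | zero => simp
  | succ n ih =>
    rw [Function.iterate_succ_apply', ih]
    linear_combination -hfix

theorem iterate_eq_self_iff {F : Type*} [Field F] {r : F} (γ : F) (h1 : r ≠ 1)
    (a : F) (n : ℕ) :
    (fun x : F => r⁻¹ * (x + γ))^[n] a = a ↔ r ^ n = 1 ∨ a = r⁻¹ * γ / (1 - r⁻¹) := by
  rw [iterate_homothety γ h1]
  generalize r⁻¹ * γ / (1 - r⁻¹) = c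
  rw [← inv_eq_one (a := r ^ n), ← inv_pow, ← sub_eq_zero, ← sub_eq_zero (a := r⁻¹ ^ n),
    ← sub_eq_zero (a := a), ← mul_eq_zero]
  ring_nf

/-- Free points of the affine map `φ(a) = r⁻¹(a + γ)` on a field `F`: the set
`{a : φⁿ(a) ≠ a for all n ≥ 1}` equals the complement of `{r⁻¹γ/(1 - r⁻¹)}` when `r` is not
a root of unity; equals all of `F` when `r = 1`, `γ ≠ 0` and `char F = 0`; and is empty in
all remaining cases. -/
theorem free_points_of_affine_map (F : Type*) [Field F] (r γ : F) (hr : r ≠ 0) :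
    ((∀ n : ℕ, 1 ≤ n → r ^ n ≠ 1) →
      {a : F | ∀ n : ℕ, 1 ≤ n → (fun x : F => r⁻¹ * (x + γ))^[n] a ≠ a}
        = {r⁻¹ * γ / (1 - r⁻¹)}ᶜ) ∧
    ((r = 1 ∧ γ ≠ 0 ∧ ringChar F = 0) →
      {a : F | ∀ n : ℕ, 1 ≤ n → (fun x : F => r⁻¹ * (x + γ))^[n] a ≠ a} = Set.univ) ∧
    ((¬ (∀ n : ℕ, 1 ≤ n → r ^ n ≠ 1)) ∧ ¬ (r = 1 ∧ γ ≠ 0 ∧ ringChar F = 0) →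
      {a : F | ∀ n : ℕ, 1 ≤ n → (fun x : F => r⁻¹ * (x + γ))^[n] a ≠ a} = ∅) := by
  refine ⟨fun h => ?_, ?_, ?_⟩
  · have h1 : r ≠ 1 := by simpa using h 1 le_rfl
    ext a
    simp only [Set.mem_ofPred_eq, Set.mem_compl_iff, Set.mem_singleton_iff, ne_eq,
      iterate_eq_self_iff γ h1, not_or]
    exact ⟨fun H => (H 1 le_rfl).2, fun H n hn => ⟨h n hn, H⟩⟩
  · rintro ⟨rfl, hγ, hchar⟩
    have : CharZero F := (CharP.ringChar_zero_iff_CharZero F).mp hchar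
    refine Set.eq_univ_of_forall fun a n hn => ?_
    rw [iterate_translation]
    simpa [hγ] using Nat.one_le_iff_ne_zero.mp hn
  · rintro ⟨hroot, hne⟩
    push Not at hroot
    obtain ⟨n, hn, hrn⟩ := hroot
    refine Set.eq_empty_of_forall_notMem fun a ha => ?_
    by_cases h1 : r = 1
    · subst h1
      by_cases hγ : γ = 0
      · exact ha 1 le_rfl (by simp [hγ])
      · have hchar : ringChar F ≠ 0 := fun h => hne ⟨rfl, hγ, h⟩
        refine ha (ringChar F) (Nat.one_le_iff_ne_zero.mpr hchar) ?_
        rw [iterate_translation]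
        simp
    · exact ha n hn ((iterate_eq_self_iff γ h1 a n).mpr (Or.inl hrn))
end

section
/- If char F = 0, then for every a ∈ F the set {n ≥ 1 : Z_n(a) = 0} is finite. If char F = p > 0, then for every a ∈ F this set is infinite; in fact it contains every n ≥ 1 divisible by p². -/
/-!
In characteristic zero, `n ↦ ∑_{i<n} f(a + iγ)` is the restriction to `ℕ` of a polynomial `G`
(`exists_poly_eval_natCast_eq_sum`, from Faulhaber's formula). If it vanished for infinitely
many `n`, then `G = 0`; taking differences, `f(a + iγ) = 0` for every `i`, so the nonzero
polynomial `f` would have infinitely many roots.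

In characteristic `p`, the summand is periodic in `i` with period `p`, so the sum over a range of
length `p * m` is `m` times the sum over one period, which is zero as soon as `p ∣ m`.
-/

/-- Discrete integration of polynomials: in characteristic zero the partial sums of a polynomial
sequence are again polynomial. -/
lemma exists_poly_eval_natCast_eq_sum {F : Type*} [Field F] [CharZero F] (g : Polynomial F) :
    ∃ G : Polynomial F, ∀ n : ℕ, G.eval (n : F) = ∑ i ∈ Finset.range n, g.eval (i : F) := by
  induction g using Polynomial.induction_on' with
  | add p q hp hq =>
    obtain ⟨P, hP⟩ := hp
    obtain ⟨Q, hQ⟩ := hq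
    exact ⟨P + Q, fun n => by simp [hP, hQ, Finset.sum_add_distrib]⟩
  | monomial k c =>
    -- The Faulhaber polynomial for `k`-th powers, transported from `ℚ` to `F` and scaled by `c`.
    let B : Polynomial ℚ :=
      Polynomial.C ((k : ℚ) + 1)⁻¹ *
        (Polynomial.bernoulli k.succ - Polynomial.C (bernoulli k.succ))
    have hB (n : ℕ) : B.eval (n : ℚ) = ∑ i ∈ Finset.range n, (i : ℚ) ^ k := by
      have hk : (k : ℚ) + 1 ≠ 0 := by positivity
      simp only [B, Polynomial.eval_mul, Polynomial.eval_sub, Polynomial.eval_C]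
      rw [← Polynomial.sum_range_pow_eq_bernoulli_sub, inv_mul_cancel_left₀ hk]
    refine ⟨Polynomial.C c * B.map (algebraMap ℚ F), fun n => ?_⟩
    have h := congrArg (algebraMap ℚ F) (hB n)
    rw [← Polynomial.eval_map_apply] at h
    simp only [map_natCast, map_sum, map_pow] at h
    simp [h, Finset.mul_sum]

/-- A sum of a `p`-periodic sequence over `m` full periods. -/
lemma sum_range_mul_of_periodic {M : Type*} [AddCommMonoid M] {u : ℕ → M} {p : ℕ}
    (hu : Function.Periodic u p) (m : ℕ) :
    ∑ i ∈ Finset.range (p * m), u i = m • ∑ i ∈ Finset.range p, u i := by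
  induction m with
  | zero => simp
  | succ m ih =>
    rw [Nat.mul_succ, Finset.sum_range_add, ih, succ_nsmul]
    congr 1
    refine Finset.sum_congr rfl fun i _ => ?_
    rw [add_comm, mul_comm]
    exact hu.nat_mul m i

/-- Let `γ ≠ 0` and `f` a nonzero polynomial, and set `Z_n(a) = Σ_{i=0}^{n-1} f(a + iγ)`.
If `char F = 0` then `{n ≥ 1 : Z_n(a) = 0}` is finite for every `a`; if `char F = p > 0`
then this set is infinite for every `a` — indeed it contains every `n ≥ 1` divisible
by `p²`. -/
theorem sum_eval_zero_set_finite_or_infinite (F : Type*) [Field F] (γ : F) (hγ : γ ≠ 0)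
    (f : Polynomial F) (hf : f ≠ 0) :
    (ringChar F = 0 → ∀ a : F,
      {n : ℕ | 1 ≤ n ∧ ∑ i ∈ Finset.range n, f.eval (a + (i : F) * γ) = 0}.Finite) ∧
    (∀ p : ℕ, p.Prime → ringChar F = p → ∀ a : F,
      {n : ℕ | 1 ≤ n ∧ ∑ i ∈ Finset.range n, f.eval (a + (i : F) * γ) = 0}.Infinite ∧
      ∀ n : ℕ, 1 ≤ n → p ^ 2 ∣ n →
        ∑ i ∈ Finset.range n, f.eval (a + (i : F) * γ) = 0) := by
  constructor
  · intro h0 a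
    have : CharP F 0 := ringChar.of_eq h0
    have : CharZero F := CharP.charP_to_charZero F
    obtain ⟨G, hG⟩ := exists_poly_eval_natCast_eq_sum
      (f.comp (Polynomial.C a + Polynomial.X * Polynomial.C γ))
    simp only [Polynomial.eval_comp, Polynomial.eval_add, Polynomial.eval_mul, Polynomial.eval_C,
      Polynomial.eval_X] at hG
    by_contra hinf
    have hG0 : G = 0 := by
      refine Polynomial.eq_zero_of_infinite_isRoot G
        ((Set.Infinite.image (Nat.cast_injective (R := F)).injOn hinf).mono ?_)
      rintro _ ⟨n, hn, rfl⟩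
      exact (hG n).trans hn.2
    have hroot (i : ℕ) : f.eval (a + (i : F) * γ) = 0 := by
      have h1 := hG (i + 1)
      rw [Finset.sum_range_succ, ← hG i, hG0] at h1
      simpa using h1.symm
    have hinj : Function.Injective fun i : ℕ => a + (i : F) * γ := fun i j hij =>
      Nat.cast_injective (mul_right_cancel₀ hγ (add_left_cancel hij))
    refine hf (Polynomial.eq_zero_of_infinite_isRoot f
      ((Set.infinite_range_of_injective hinj).mono ?_))
    rintro _ ⟨i, rfl⟩
    exact hroot i
  · intro p hp hchar a
    have : CharP F p := ringChar.of_eq hchar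
    have hper : Function.Periodic (fun i : ℕ => f.eval (a + (i : F) * γ)) p := fun i => by
      simp
    have hdvd (n : ℕ) (hn : p ^ 2 ∣ n) :
        ∑ i ∈ Finset.range n, f.eval (a + (i : F) * γ) = 0 := by
      obtain ⟨k, rfl⟩ := hn
      rw [pow_two, mul_assoc, sum_range_mul_of_periodic hper, nsmul_eq_mul]
      simp
    refine ⟨?_, fun n _ hn => hdvd n hn⟩
    have hpos : 0 < p ^ 2 := pow_pos hp.pos 2
    have hinj : Function.Injective fun k : ℕ => p ^ 2 * (k + 1) := fun i j hij =>
      Nat.succ_injective (Nat.eq_of_mul_eq_mul_left hpos hij)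
    refine (Set.infinite_range_of_injective hinj).mono ?_
    rintro _ ⟨k, rfl⟩
    exact ⟨Nat.mul_pos hpos k.succ_pos, hdvd _ (dvd_mul_right _ _)⟩
end

section
/- For every a ∈ F, both of the sets {n ≥ 1 : Σ_{i=0}^{n-1} s^{−1−i}·f(a + iγ) = 0} and {n ≥ 1 : Σ_{j=1}^{n} s^{j−n−1}·f(a − jγ) = 0} are finite. -/
/-!
Both sums are, up to a power of `s`, of the form `∑_{i<n} r ^ i * g(i)` with `r = s⁻¹` or `r = s`
and `g` a nonzero polynomial. As `r ≠ 1`, the operator `G ↦ r G(X + 1) - G` is surjective on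
polynomials (it multiplies the coefficient of the top power by `r - 1`), so the sum telescopes to
`r ^ n * G(n) - G(0)` with `G ≠ 0`. If `G(0) = 0`, its zeros are roots of `G`. Otherwise they
are solutions of `G(n) = G(0) * (r⁻¹) ^ n`, and no Skolem–Mahler–Lech theorem is needed:
the data lie in a countable field of characteristic zero, which embeds in `ℂ`, and there

* if `‖r⁻¹‖ > 1`, the exponential outgrows the polynomial;
* if `‖r⁻¹‖ ≤ 1`, then `G` is bounded on infinitely many naturals, so it is constant, and two
  distinct solutions make `r` a root of unity.
-/

open Polynomial Filter Topology in
theorem finite_eval_eq_mul_pow_complex (P : ℂ[X]) (s c : ℂ) (hs0 : s ≠ 0) (hc : c ≠ 0)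
    (hs : ∀ n : ℕ, 1 ≤ n → s ^ n ≠ 1) : {n : ℕ | P.eval (n : ℂ) = c * s ^ n}.Finite := by
  by_contra hinf
  have hfr : ∃ᶠ n : ℕ in atTop, P.eval (n : ℂ) = c * s ^ n :=
    Nat.frequently_atTop_iff_infinite.2 hinf
  rcases lt_or_ge 1 ‖s‖ with h1 | h1
  · have hlim : Tendsto (fun n : ℕ => P.eval (n : ℂ) / s ^ n) atTop (𝓝 0) := by
      have hmon : ∀ k : ℕ, Tendsto (fun n : ℕ => P.coeff k * ((n : ℂ) ^ k / s ^ n)) atTop (𝓝 0) := by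
        intro k
        have h := tendsto_pow_const_div_const_pow_of_one_lt k h1
        have h' : Tendsto (fun n : ℕ => (n : ℂ) ^ k / s ^ n) atTop (𝓝 0) := by
          rw [tendsto_zero_iff_norm_tendsto_zero]
          simpa using h
        simpa using h'.const_mul (P.coeff k)
      have hsum := tendsto_finsetSum (Finset.range (P.natDegree + 1)) (fun k _ => hmon k)
      simp only [Finset.sum_const_zero] at hsum
      refine hsum.congr fun n => ?_
      rw [eval_eq_sum_range, Finset.sum_div]
      exact Finset.sum_congr rfl fun k _ => by ring
    have hev : ∀ᶠ n : ℕ in atTop, P.eval (n : ℂ) / s ^ n ≠ c :=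
      hlim.eventually_ne hc.symm
    obtain ⟨n, hn, hn'⟩ := (hfr.and_eventually hev).exists
    exact hn' (by rw [hn]; field_simp)
  · have hdeg : P.degree ≤ 0 := by
      by_contra hd
      have ht := P.tendsto_norm_atTop (not_le.1 hd) (z := fun n : ℕ => (n : ℂ)) (l := atTop)
        (by simpa using tendsto_natCast_atTop_atTop (R := ℝ))
      obtain ⟨n, hn, hn'⟩ := (hfr.and_eventually (ht.eventually_gt_atTop ‖c‖)).exists
      rw [hn, norm_mul, norm_pow] at hn'
      have := mul_le_of_le_one_right (norm_nonneg c) (pow_le_one₀ (norm_nonneg s) h1 (n := n))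
      linarith
    rw [eq_C_of_degree_le_zero hdeg] at hfr
    simp only [eval_C] at hfr
    obtain ⟨n, hn⟩ := hfr.exists
    obtain ⟨m, hm, hnm⟩ := (hfr.and_eventually (eventually_gt_atTop n)).exists
    have h : s ^ n = s ^ m := mul_left_cancel₀ hc (hn.symm.trans hm)
    refine hs (m - n) (by omega) (mul_left_cancel₀ (pow_ne_zero n hs0) ?_)
    rw [← pow_add, Nat.add_sub_cancel' hnm.le, mul_one, h]

/-- A transcendence basis of the countable field injects into one of `ℂ`, and the resulting
embedding of polynomial rings extends along an algebraic extension. -/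
theorem nonempty_ringHom_complex (K : Type*) [Field K] [CharZero K] [Countable K] :
    Nonempty (K →+* ℂ) := by
  obtain ⟨B, hB⟩ := exists_isTranscendenceBasis ℤ K
  obtain ⟨T, hT⟩ := exists_isTranscendenceBasis ℤ ℂ
  have hCT := IsAlgClosed.cardinal_eq_cardinal_transcendence_basis_of_aleph0_lt _ hT
    (le_of_eq Cardinal.mk_int) (by simpa using Cardinal.aleph0_lt_continuum)
  have hTinf : Infinite T := by
    rw [Cardinal.infinite_iff]
    have h : Cardinal.mk ℂ = Cardinal.mk T := by simpa using hCT
    rw [← h]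
    simpa using Cardinal.aleph0_le_continuum
  obtain ⟨b, hb⟩ := Countable.exists_injective_nat B
  have he : Function.Injective (fun x => Infinite.natEmbedding T (b x)) :=
    (Infinite.natEmbedding T).injective.comp hb
  have hw := hT.1.comp _ he
  let φ : Algebra.adjoin ℤ (Set.range ((↑) : B → K)) →+* ℂ :=
    ((MvPolynomial.aeval (R := ℤ) (((↑) : T → ℂ) ∘ fun x => Infinite.natEmbedding T (b x))).comp
      hB.1.aevalEquiv.symm.toAlgHom).toRingHom
  have hφ : Function.Injective φ :=
    Function.Injective.comp (g := MvPolynomial.aeval (R := ℤ)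
      (((↑) : T → ℂ) ∘ fun x => Infinite.natEmbedding T (b x))) hw hB.1.aevalEquiv.symm.injective
  let := φ.toAlgebra
  have : FaithfulSMul (Algebra.adjoin ℤ (Set.range ((↑) : B → K))) ℂ :=
    (faithfulSMul_iff_algebraMap_injective _ _).2 hφ
  have := hB.isAlgebraic
  exact ⟨(IsAlgClosed.lift (R := Algebra.adjoin ℤ (Set.range ((↑) : B → K)))
    (S := K) (M := ℂ)).toRingHom⟩

open Polynomial in
theorem finite_eval_eq_mul_pow {F : Type*} [Field F] [CharZero F] (P : F[X]) (s c : F)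
    (hs0 : s ≠ 0) (hc : c ≠ 0) (hs : ∀ n : ℕ, 1 ≤ n → s ^ n ≠ 1) :
    {n : ℕ | P.eval (n : F) = c * s ^ n}.Finite := by
  classical
  let S : Set F := insert s (insert c (P.coeffs : Set F))
  let K : Subfield F := Subfield.closure S
  have hS : S.Countable := ((P.coeffs.countable_toSet).insert c).insert s
  have : Countable K := by
    rw [← Cardinal.mk_le_aleph0_iff]
    exact (Subfield.cardinalMk_closure_le_max S).trans
      (max_le (Cardinal.le_aleph0_iff_set_countable.2 hS) le_rfl)
  obtain ⟨φ⟩ := nonempty_ringHom_complex K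
  have hsub : S ⊆ K := Subfield.subset_closure
  let s' : K := ⟨s, hsub (by simp [S])⟩
  let c' : K := ⟨c, hsub (by simp [S])⟩
  obtain ⟨Q, hQ⟩ : ∃ Q : K[X], Q.map K.subtype = P := by
    refine (mem_lifts P).1 ((lifts_iff_coeff_lifts P).2 fun k => ?_)
    by_cases hk : P.coeff k = 0
    · exact ⟨0, by simp [hk]⟩
    · exact ⟨⟨P.coeff k, hsub (by
        simpa [S] using Or.inr (Or.inr (coeff_mem_coeffs hk)))⟩, rfl⟩
  have hs0' : s' ≠ 0 := fun h => hs0 (congrArg Subtype.val h)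
  have hc' : c' ≠ 0 := fun h => hc (congrArg Subtype.val h)
  refine (finite_eval_eq_mul_pow_complex (Q.map φ) (φ s') (φ c') (by simpa using hs0')
    (by simpa using hc') fun n hn h => ?_).subset fun n hn => ?_
  · rw [← map_pow, map_eq_one_iff φ φ.injective] at h
    exact hs n hn (by simpa [s'] using congrArg Subtype.val h)
  · have h : Q.eval (n : K) = c' * s' ^ n := by
      apply K.subtype.injective
      have hn' : P.eval (n : F) = c * s ^ n := hn
      rw [← hQ, ← map_natCast K.subtype n, eval_map_apply] at hn'
      rw [hn']
      simp [s', c']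
    show (Q.map φ).eval (n : ℂ) = φ c' * φ s' ^ n
    rw [← map_natCast φ n, eval_map_apply, h, map_mul, map_pow]

open Polynomial in
/-- Surjectivity of `G ↦ r G(X + 1) - G` for `r ≠ 1`. On monomials it is triangular with
diagonal entries `r - 1`. -/
theorem exists_twisted_antidifference {F : Type*} [Field F] (r : F) (hr : r ≠ 1)
    (g : Polynomial F) :
    ∃ G : Polynomial F, Polynomial.C r * G.comp (Polynomial.X + 1) - G = g := by
  let L : F[X] →ₗ[F] F[X] :=
    { toFun := fun G => C r * G.comp (X + 1) - G
      map_add' := fun p q => by simp only [add_comp]; ring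
      map_smul' := fun a p => by
        simp only [smul_eq_C_mul, mul_comp, C_comp, RingHom.id_apply]; ring }
  have hX : ∀ n : ℕ, (X ^ n : F[X]) ∈ LinearMap.range L := by
    intro n
    induction n using Nat.strong_induction_on with
    | _ n ih =>
      have h : L (X ^ n) = (r - 1) • X ^ n
          + ∑ k ∈ Finset.range n, (r * (n.choose k : F)) • (X ^ k : F[X]) := by
        change C r * (X ^ n : F[X]).comp (X + 1) - X ^ n = _
        simp only [pow_comp, X_comp, add_pow, Finset.sum_range_succ, one_pow, mul_one,
          smul_eq_C_mul, mul_add, Finset.mul_sum, Nat.choose_self, Nat.cast_one, C_mul, C_sub,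
          C_1, map_natCast]
        rw [Finset.sum_congr rfl fun k _ =>
          show C r * (X ^ k * (n.choose k : F[X])) = C r * (n.choose k : F[X]) * X ^ k by ring]
        ring
      have h2 : (X ^ n : F[X]) = (r - 1)⁻¹ • (L (X ^ n)
          - ∑ k ∈ Finset.range n, (r * (n.choose k : F)) • (X ^ k : F[X])) := by
        rw [h, add_sub_cancel_right, smul_smul, inv_mul_cancel₀ (sub_ne_zero.2 hr), one_smul]
      rw [h2]
      exact Submodule.smul_mem _ _ (Submodule.sub_mem _ ⟨_, rfl⟩
        (Submodule.sum_mem _ fun k hk => Submodule.smul_mem _ _ (ih k (Finset.mem_range.1 hk))))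
  have hg : g ∈ LinearMap.range L := by
    rw [g.as_sum_range_C_mul_X_pow]
    refine Submodule.sum_mem _ fun k _ => ?_
    rw [← smul_eq_C_mul]
    exact Submodule.smul_mem _ _ (hX k)
  exact hg

theorem finite_sum_pow_mul_eval_eq_zero {F : Type*} [Field F] [CharZero F] (r : F) (hr0 : r ≠ 0)
    (hr : ∀ n : ℕ, 1 ≤ n → r ^ n ≠ 1) (g : Polynomial F) (hg : g ≠ 0) :
    {n : ℕ | ∑ i ∈ Finset.range n, r ^ i * g.eval (i : F) = 0}.Finite := by
  obtain ⟨G, hG⟩ := exists_twisted_antidifference r (by simpa using hr 1 le_rfl) g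
  have hG0 : G ≠ 0 := by
    rintro rfl
    exact hg (by simpa using hG.symm)
  have hsum : ∀ n : ℕ, ∑ i ∈ Finset.range n, r ^ i * g.eval (i : F)
      = r ^ n * G.eval (n : F) - G.eval 0 := by
    intro n
    induction n with
    | zero => simp
    | succ n ih =>
      rw [Finset.sum_range_succ, ih, ← hG]
      simp only [Polynomial.eval_sub, Polynomial.eval_mul, Polynomial.eval_C,
        Polynomial.eval_comp, Polynomial.eval_add, Polynomial.eval_X, Polynomial.eval_one,
        Nat.cast_add, Nat.cast_one]
      ring
  simp only [hsum]
  by_cases h0 : G.eval 0 = 0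
  · refine ((Polynomial.finite_setOfPred_isRoot hG0).preimage
      (f := fun n : ℕ => (n : F)) Nat.cast_injective.injOn).subset fun n hn => ?_
    simpa [h0, hr0] using hn
  · refine (finite_eval_eq_mul_pow G r⁻¹ (G.eval 0) (inv_ne_zero hr0) h0 fun n hn h =>
      hr n hn (by simpa using h)).subset fun n hn => ?_
    have hn' : r ^ n * G.eval (n : F) = G.eval 0 := sub_eq_zero.1 hn
    show G.eval (n : F) = G.eval 0 * r⁻¹ ^ n
    rw [← hn', inv_pow]
    field_simp

theorem comp_C_add_C_mul_X_ne_zero {F : Type*} [Field F] (f : Polynomial F) (hf : f ≠ 0)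
    (b δ : F) (hδ : δ ≠ 0) : f.comp (Polynomial.C b + Polynomial.C δ * Polynomial.X) ≠ 0 := by
  have hd : (Polynomial.C b + Polynomial.C δ * Polynomial.X).natDegree = 1 := by
    rw [add_comm]
    exact Polynomial.natDegree_linear hδ
  intro h
  rcases Polynomial.comp_eq_zero_iff.1 h with h | ⟨-, h⟩
  · exact hf h
  · rw [h, Polynomial.natDegree_C] at hd
    exact zero_ne_one hd

/-- Condition (S3) for generalized down-up algebras: if `char F = 0`, `γ ≠ 0`, `s` is not a
root of unity and `f ≠ 0`, then for every `a ∈ F` both sets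
`{n ≥ 1 : Σ_{i=0}^{n-1} s^{−1−i} f(a + iγ) = 0}` and
`{n ≥ 1 : Σ_{j=1}^{n} s^{j−n−1} f(a − jγ) = 0}` are finite. -/
theorem downUp_linkage_finite (F : Type*) [Field F] [CharZero F] (γ s : F)
    (hγ : γ ≠ 0) (hs0 : s ≠ 0) (hs : ∀ n : ℕ, 1 ≤ n → s ^ n ≠ 1)
    (f : Polynomial F) (hf : f ≠ 0) (a : F) :
    {n : ℕ | 1 ≤ n ∧
      ∑ i ∈ Finset.range n, s ^ (-1 - (i : ℤ)) * f.eval (a + (i : F) * γ) = 0}.Finite ∧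
    {n : ℕ | 1 ≤ n ∧
      ∑ j ∈ Finset.Icc 1 n, s ^ ((j : ℤ) - (n : ℤ) - 1) * f.eval (a - (j : F) * γ) = 0}.Finite := by
  constructor
  · refine (finite_sum_pow_mul_eval_eq_zero s⁻¹ (inv_ne_zero hs0)
      (fun n hn h => hs n hn (by simpa using h)) _
      (comp_C_add_C_mul_X_ne_zero f hf a γ hγ)).subset ?_
    rintro n ⟨-, hn⟩
    have key : s⁻¹ * ∑ i ∈ Finset.range n, s⁻¹ ^ i *
        (f.comp (Polynomial.C a + Polynomial.C γ * Polynomial.X)).eval (i : F) = 0 := by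
      rw [← hn, Finset.mul_sum]
      refine Finset.sum_congr rfl fun i _ => ?_
      rw [zpow_sub₀ hs0, zpow_neg_one, zpow_natCast]
      simp only [Polynomial.eval_comp, Polynomial.eval_add, Polynomial.eval_mul,
        Polynomial.eval_C, Polynomial.eval_X, mul_comm γ, inv_pow]
      ring
    exact (mul_eq_zero.1 key).resolve_left (inv_ne_zero hs0)
  · refine (finite_sum_pow_mul_eval_eq_zero s hs0 hs _
      (comp_C_add_C_mul_X_ne_zero f hf (a - γ) (-γ) (neg_ne_zero.2 hγ))).subset ?_
    rintro n ⟨-, hn⟩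
    -- Substituting `j = i + 1` turns the exponent `j - n - 1` into `i - n`.
    have key : (s ^ n)⁻¹ * ∑ i ∈ Finset.range n, s ^ i *
        (f.comp (Polynomial.C (a - γ) + Polynomial.C (-γ) * Polynomial.X)).eval (i : F) = 0 := by
      rw [← hn, Finset.mul_sum, ← Finset.Ico_add_one_right_eq_Icc, Finset.sum_Ico_eq_sum_range,
        Nat.add_sub_cancel]
      refine Finset.sum_congr rfl fun i _ => ?_
      rw [show (((1 + i : ℕ) : ℤ) - (n : ℤ) - 1) = (i : ℤ) - (n : ℤ) by push_cast; ring,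
        zpow_sub₀ hs0, zpow_natCast, zpow_natCast]
      simp only [Polynomial.eval_comp, Polynomial.eval_add, Polynomial.eval_mul,
        Polynomial.eval_C, Polynomial.eval_X]
      rw [show a - ((1 + i : ℕ) : F) * γ = a - γ + -γ * (i : F) by push_cast; ring]
      ring
    exact (mul_eq_zero.1 key).resolve_left (inv_ne_zero (pow_ne_zero n hs0))
end

section
/- Let (G₀, Q₀, ⋉₀) and (G₁, Q₁, ⋉₁) be regular triangular monoids with G_i generated by Q_i, and let φ : G₀ → Aut(G₁) be an action of G₀ on G₁ by group automorphisms which is admissible: φ(g)(Q₁) ⊆ Q₁ for all g ∈ G₀, and φ(g)(θ₁ ⋉₁ θ₂⁻¹) = φ(g)(θ₁) ⋉₁ (φ(g)(θ₂))⁻¹ for all g ∈ G₀ and θ₁, θ₂ ∈ Q₁. Then in the semidirect product group G₁ ⋊_φ G₀, the submonoid Q₁ ⋊ Q₀ := {(θ₁, θ₀) : θ₁ ∈ Q₁, θ₀ ∈ Q₀}, whose set of inverses is {(η₁, η₀) : η₁ ∈ Q₁⁻¹, η₀ ∈ Q₀⁻¹}, equipped with the action (θ₁⁺, θ₀⁺)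 ⋉ (η₁, η₀) := (θ₁⁺ ⋉₁ φ(θ₀⁺)(η₁), θ₀⁺ ⋉₀ η₀), is a regular triangular monoid. -/
/-!
All conditions are checked componentwise; the `G₀`-component is immediate. For the
`G₁`-component, take `θ₁ = (a, b)`, `θ₂ = (c, d)` and put `k = b d⁻¹`. The cocycle identity in
`G₀` reads `k = v u⁻¹` with `v = b ⋉₀ d⁻¹` and `u = d ⋉₀ b⁻¹`. Since `φ` commutes with `⋉₁`, every
twist by `φ` occurring in the conditions combines to `φ k`, so that the conditions for
`(θ₁, θ₂, θ₃)` become those of `G₁` for `a`, `φ k c` and (for `θ₃ = (e, f)`) `φ (k f⁻¹) e`.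
-/

/-- A regular triangular monoid (RTM) structure: `Q` is a submonoid of a group `G` such that
`Q \ {1}` is a semigroup, together with an action `⋉` of `Q` on `Q⁻¹` (encoded as a total
function `act : G → G → G`, constrained only on the relevant elements) fixing `1` and
satisfying the two cocycle conditions. -/
structure IsRTM {G : Type*} [Group G] (Q : Submonoid G) (act : G → G → G) : Prop where
  mul_ne_one : ∀ q ∈ Q, ∀ q' ∈ Q, q ≠ 1 → q' ≠ 1 → q * q' ≠ 1
  act_mem : ∀ θ ∈ Q, ∀ x ∈ Q, (act θ x⁻¹)⁻¹ ∈ Q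
  one_act : ∀ x ∈ Q, act 1 x⁻¹ = x⁻¹
  mul_act : ∀ q ∈ Q, ∀ q' ∈ Q, ∀ x ∈ Q, act (q * q') x⁻¹ = act q (act q' x⁻¹)
  act_one : ∀ q ∈ Q, act q 1 = 1
  cocycle1 : ∀ θ₁ ∈ Q, ∀ θ₂ ∈ Q, θ₁ * θ₂⁻¹ = act θ₁ θ₂⁻¹ * (act θ₂ θ₁⁻¹)⁻¹
  cocycle2 : ∀ θ₁ ∈ Q, ∀ θ₂ ∈ Q, ∀ θ₃ ∈ Q,
    act θ₁ (θ₂⁻¹ * θ₃⁻¹) = act θ₁ θ₂⁻¹ * act (act θ₂ θ₁⁻¹)⁻¹ θ₃⁻¹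

/-- The submonoid `Q₁ ⋊ Q₀ = {(θ₁, θ₀) : θ₁ ∈ Q₁, θ₀ ∈ Q₀}` of the semidirect product
`G₁ ⋊[φ] G₀`, for an action `φ` preserving `Q₁`. -/
def sdSubmonoid {G₀ G₁ : Type*} [Group G₀] [Group G₁] (Q₀ : Submonoid G₀)
    (Q₁ : Submonoid G₁) (φ : G₀ →* MulAut G₁)
    (hadm : ∀ g : G₀, ∀ q ∈ Q₁, φ g q ∈ Q₁) :
    Submonoid (G₁ ⋊[φ] G₀) where
  carrier := {x | x.left ∈ Q₁ ∧ x.right ∈ Q₀}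
  one_mem' := by
    constructor
    · simpa using Q₁.one_mem
    · simpa using Q₀.one_mem
  mul_mem' := by
    intro a b ha hb
    constructor
    · rw [SemidirectProduct.mul_left]
      exact Q₁.mul_mem ha.1 (hadm _ _ hb.1)
    · rw [SemidirectProduct.mul_right]
      exact Q₀.mul_mem ha.2 hb.2

/-- Semidirect products of regular triangular monoids: if `(G₀, Q₀, ⋉₀)` and `(G₁, Q₁, ⋉₁)`
are RTMs with `G_i` generated by `Q_i`, and `φ : G₀ → Aut(G₁)` is an admissible action, then
`Q₁ ⋊ Q₀ ⊆ G₁ ⋊[φ] G₀`, whose set of inverses is `{(η₁, η₀) : η₁ ∈ Q₁⁻¹, η₀ ∈ Q₀⁻¹}`, with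
the action `(θ₁⁺, θ₀⁺) ⋉ (η₁, η₀) := (θ₁⁺ ⋉₁ φ(θ₀⁺)(η₁), θ₀⁺ ⋉₀ η₀)`, is an RTM. -/
theorem isRTM_semidirectProduct (G₀ G₁ : Type*) [Group G₀] [Group G₁]
    (Q₀ : Submonoid G₀) (Q₁ : Submonoid G₁)
    (act₀ : G₀ → G₀ → G₀) (act₁ : G₁ → G₁ → G₁)
    (h₀ : IsRTM Q₀ act₀) (h₁ : IsRTM Q₁ act₁)
    (hgen₀ : Subgroup.closure (Q₀ : Set G₀) = ⊤)
    (hgen₁ : Subgroup.closure (Q₁ : Set G₁) = ⊤)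
    (φ : G₀ →* MulAut G₁)
    (hadm1 : ∀ g : G₀, ∀ q ∈ Q₁, φ g q ∈ Q₁)
    (hadm2 : ∀ g : G₀, ∀ θ₁ ∈ Q₁, ∀ θ₂ ∈ Q₁,
      φ g (act₁ θ₁ θ₂⁻¹) = act₁ (φ g θ₁) (φ g θ₂)⁻¹) :
    ((↑(sdSubmonoid Q₀ Q₁ φ hadm1) : Set (G₁ ⋊[φ] G₀))⁻¹
      = {x : G₁ ⋊[φ] G₀ | x.left ∈ ((Q₁ : Set G₁))⁻¹ ∧ x.right ∈ ((Q₀ : Set G₀))⁻¹}) ∧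
    IsRTM (sdSubmonoid Q₀ Q₁ φ hadm1)
      (fun θ x => ⟨act₁ θ.left (φ θ.right x.left), act₀ θ.right x.right⟩) := by
  -- Admissibility, for a second argument given as an element whose inverse lies in `Q₁`.
  have hφ : ∀ g : G₀, ∀ θ ∈ Q₁, ∀ y : G₁, y⁻¹ ∈ Q₁ →
      φ g (act₁ θ y) = act₁ (φ g θ) (φ g y) := by
    intro g θ hθ y hy
    simpa using hadm2 g θ hθ y⁻¹ hy
  have hinv : ∀ g : G₀, ∀ q ∈ Q₁, (φ g q⁻¹)⁻¹ ∈ Q₁ := by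
    intro g q hq
    simpa using hadm1 g q hq
  have hcomp : ∀ g h : G₀, ∀ x : G₁, φ g (φ h x) = φ (g * h) x := by
    intro g h x
    simp
  refine ⟨?_, ?_, ?_, ?_, ?_, ?_, ?_, ?_⟩
  · ext ⟨x, y⟩
    change ((φ y⁻¹ x⁻¹ ∈ Q₁) ∧ y⁻¹ ∈ Q₀) ↔ (x⁻¹ ∈ Q₁ ∧ y⁻¹ ∈ Q₀)
    refine and_congr_left fun _ => ⟨fun h => ?_, hadm1 _ _⟩
    have h' := hadm1 y _ h
    rwa [hcomp, mul_inv_cancel, map_one, MulAut.one_apply] at h'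
  · rintro ⟨a, b⟩ ⟨ha, hb⟩ ⟨c, d⟩ ⟨hc, hd⟩ hq hq' h
    dsimp only at ha hb hc hd
    have hl : a * φ b c = 1 := congrArg SemidirectProduct.left h
    have hr : b * d = 1 := congrArg SemidirectProduct.right h
    have hb1 : b = 1 := by
      by_contra hb1
      refine h₀.mul_ne_one b hb d hd hb1 ?_ hr
      rintro rfl
      exact hb1 (by simpa using hr)
    subst hb1
    obtain rfl : d = 1 := by simpa using hr
    have hl' : a * c = 1 := by simpa using hl
    refine h₁.mul_ne_one a ha c hc ?_ ?_ hl'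
    · rintro rfl
      exact hq rfl
    · rintro rfl
      exact hq' rfl
  · rintro ⟨a, b⟩ ⟨ha, hb⟩ ⟨c, d⟩ ⟨hc, hd⟩
    dsimp only at ha hb hc hd
    refine ⟨?_, h₀.act_mem b hb d hd⟩
    change φ _ (act₁ a (φ b (φ d⁻¹ c⁻¹)))⁻¹ ∈ Q₁
    refine hadm1 _ _ ?_
    rw [hcomp, map_inv]
    exact h₁.act_mem a ha _ (hadm1 _ c hc)
  · rintro ⟨c, d⟩ ⟨hc, hd⟩
    dsimp only at hc hd
    refine SemidirectProduct.ext ?_ (h₀.one_act d hd)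
    change act₁ 1 (φ 1 (φ d⁻¹ c⁻¹)) = φ d⁻¹ c⁻¹
    rw [map_one, MulAut.one_apply, map_inv]
    exact h₁.one_act _ (hadm1 _ c hc)
  · rintro ⟨a, b⟩ ⟨ha, hb⟩ ⟨a', b'⟩ ⟨ha', hb'⟩ ⟨c, d⟩ ⟨hc, hd⟩
    dsimp only at ha hb ha' hb' hc hd
    refine SemidirectProduct.ext ?_ (h₀.mul_act b hb b' hb' d hd)
    change act₁ (a * φ b a') (φ (b * b') (φ d⁻¹ c⁻¹)) =
      act₁ a (φ b (act₁ a' (φ b' (φ d⁻¹ c⁻¹))))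
    rw [hcomp b' d⁻¹, hφ b a' ha' _ (hinv _ c hc), hcomp, hcomp, map_inv,
      h₁.mul_act a ha _ (hadm1 b a' ha') _ (hadm1 _ c hc), mul_assoc, map_inv]
  · rintro ⟨a, b⟩ ⟨ha, hb⟩
    dsimp only at ha hb
    refine SemidirectProduct.ext ?_ (h₀.act_one b hb)
    change act₁ a (φ b 1) = 1
    rw [map_one, h₁.act_one a ha]
  · rintro ⟨a, b⟩ ⟨ha, hb⟩ ⟨c, d⟩ ⟨hc, hd⟩
    dsimp only at ha hb hc hd
    have hk := h₀.cocycle1 b hb d hd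
    refine SemidirectProduct.ext ?_ hk
    change a * φ b (φ d⁻¹ c⁻¹) = act₁ a (φ b (φ d⁻¹ c⁻¹)) *
      φ (act₀ b d⁻¹) (φ (act₀ d b⁻¹)⁻¹ (act₁ c (φ d (φ b⁻¹ a⁻¹)))⁻¹)
    -- `k * (d * b⁻¹) = 1`: the twist carried by `a⁻¹` cancels.
    have hc1 : b * d⁻¹ * (d * b⁻¹) = 1 := by group
    rw [hcomp (act₀ b d⁻¹), ← hk, hcomp b, hcomp d, map_inv _ (act₁ _ _),
      hφ _ c hc _ (hinv _ a ha), hcomp, hc1, map_one, MulAut.one_apply, map_inv]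
    exact h₁.cocycle1 a ha _ (hadm1 _ c hc)
  · rintro ⟨a, b⟩ ⟨ha, hb⟩ ⟨c, d⟩ ⟨hc, hd⟩ ⟨e, f⟩ ⟨he, hf⟩
    dsimp only at ha hb hc hd he hf
    have hk := h₀.cocycle1 b hb d hd
    refine SemidirectProduct.ext ?_ (h₀.cocycle2 b hb d hd f hf)
    change act₁ a (φ b (φ d⁻¹ c⁻¹ * φ d⁻¹ (φ f⁻¹ e⁻¹))) = act₁ a (φ b (φ d⁻¹ c⁻¹)) *
      φ (act₀ b d⁻¹) (act₁ (φ (act₀ d b⁻¹)⁻¹ (act₁ c (φ d (φ b⁻¹ a⁻¹)))⁻¹)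
        (φ (act₀ d b⁻¹)⁻¹ (φ f⁻¹ e⁻¹)))
    have hW : (act₁ c (φ d (φ b⁻¹ a⁻¹)))⁻¹ ∈ Q₁ := by
      rw [hcomp, map_inv]
      exact h₁.act_mem c hc _ (hadm1 _ a ha)
    have hE : (φ (act₀ d b⁻¹)⁻¹ (φ f⁻¹ e⁻¹))⁻¹ ∈ Q₁ := by
      rw [hcomp]
      exact hinv _ e he
    -- `k * (d * b⁻¹) = 1`: the twist carried by `a⁻¹` cancels.
    have hc1 : b * d⁻¹ * (d * b⁻¹) = 1 := by group
    rw [hφ _ _ (hadm1 _ _ hW) _ hE, hcomp (act₀ b d⁻¹), hcomp (act₀ b d⁻¹), ← hk, hcomp d b⁻¹,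
      map_inv _ (act₁ _ _), hφ _ c hc _ (hinv _ a ha), hcomp (b * d⁻¹) (d * b⁻¹), hc1, map_one,
      MulAut.one_apply, map_mul, hcomp b, hcomp b, hcomp (b * d⁻¹), map_inv, map_inv]
    exact h₁.cocycle2 a ha _ (hadm1 _ c hc) _ (hadm1 _ e he)
end

section
/- The following are equivalent: (1) there exist a subspace 𝔥₀ ⊆ 𝔥₁, a decomposition M = M⁺ ⊕ M⁻ into 𝔥₁-submodules, and a linearly independent subset Δ′ of the dual space 𝔥₀* such that every weight of M⁺ restricted to 𝔥₀ is a nonzero ℕ-linear combination of elements of Δ′ and every weight of M⁻ restricted to 𝔥₀ is a nonzero element of −(ℕ-span of Δ′); (2) there exist d ∈ ℕ, a subspace K ⊆ 𝔥₁* of codimension d, and a linear isomorphism ψ : 𝔥₁*/K → F^d such that for every weight λ ∈ wt(M), ψ(λ + K) lies in ℚ^d \ {0}; (3) there exists δ ∈ 𝔥₁ such that λ(δ) ∈ ℤ \ {0} for every λ ∈ wt(M). -/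
/-!
Everything goes through (3): an element `δ` taking nonzero integer values on all weights.

* (1) ⟹ (3): as `Δ` is linearly independent and `𝔥₀` is finite-dimensional, some `δ ∈ 𝔥₀` satisfies
  `α δ = 1` for all `α ∈ Δ`. Its value on an element of the `ℕ`-span of `Δ` is the sum of the
  coefficients (`closure_apply_eq_natCast`), hence a positive integer unless that element is zero.
  Since `M = M⁺ ⊕ M⁻` as modules, every weight of `M` is a weight of `M⁺` or of `M⁻`.
* (3) ⟹ (1): take `𝔥₀ = F δ`, let `M⁺` and `M⁻` be the sums of the eigenspaces of `δ` for positive,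
  respectively negative, integers, and let `Δ` consist of the functional on `F δ` with value `1`
  at `δ`.
* (2) ⟹ (3): the weights are finite in number (`finite_weights`), so some `ℚ`-linear functional on
  `ℚ^d` vanishes at none of the rational vectors `ψ (λ + K)`. Extended to `F^d` and composed with
  `ψ`, it is a functional on `𝔥*`, that is, evaluation at an element of `𝔥`. A common denominator
  of the finitely many rational values turns it into an integral one.
* (3) ⟹ (2): take `d = 1` and `K` the kernel of evaluation at `δ`, unless `δ = 0`, in which case
  `M` has no weights at all.
-/

/-- The `λ`-weight space of a module `M` over an abelian Lie algebra `𝔥` acting via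
`π : 𝔥 → End(M)`: the subspace `{m : π(x)m = λ(x)·m for all x}`. -/
def weightSpace {F 𝔥 M : Type*} [Field F] [AddCommGroup 𝔥] [Module F 𝔥]
    [AddCommGroup M] [Module F M] (π : 𝔥 →ₗ[F] Module.End F M)
    (lam : Module.Dual F 𝔥) : Submodule F M where
  carrier := {m | ∀ x : 𝔥, π x m = lam x • m}
  add_mem' := by
    intro a b ha hb x
    simp [ha x, hb x, smul_add]
  zero_mem' := by intro x; simp
  smul_mem' := by
    intro c a ha x
    rw [map_smul, ha x, smul_comm]

section Duflo

variable {F 𝔥 M : Type*} [Field F] [AddCommGroup 𝔥] [Module F 𝔥] [AddCommGroup M] [Module F M]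

lemma weightSpace_le_eigenspace (π : 𝔥 →ₗ[F] Module.End F M) (lam : Module.Dual F 𝔥) (δ : 𝔥) :
    weightSpace π lam ≤ (π δ).eigenspace (lam δ) :=
  fun _ hm => Module.End.mem_eigenspace_iff.2 (hm δ)

lemma finite_weights [FiniteDimensional F M] (π : 𝔥 →ₗ[F] Module.End F M)
    (hcomm : ∀ x y : 𝔥, Commute (π x) (π y)) :
    {lam : Module.Dual F 𝔥 | weightSpace π lam ≠ ⊥}.Finite := by
  have h1 := Module.End.independent_iInf_maxGenEigenspace_of_forall_mapsTo (fun x => π x)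
    (fun i j φ => Module.End.mapsTo_maxGenEigenspace_of_comm (hcomm j i) φ)
  have h2 := h1.comp (f := fun lam : Module.Dual F 𝔥 => (lam : 𝔥 → F)) DFunLike.coe_injective
  refine WellFoundedGT.finite_ne_bot_of_iSupIndep (h2.mono fun lam => ?_)
  refine le_iInf fun x => (weightSpace_le_eigenspace π lam x).trans ?_
  exact (π x).genEigenspace (lam x) |>.monotone le_top

/-- An invariant decomposition splits each weight space, so a weight of `M` is a weight of one of
the two summands. -/
lemma weightSpace_inf_ne_bot (π : 𝔥 →ₗ[F] Module.End F M) {Mp Mn : Submodule F M}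
    (hp : ∀ x : 𝔥, ∀ m ∈ Mp, π x m ∈ Mp) (hn : ∀ x : 𝔥, ∀ m ∈ Mn, π x m ∈ Mn)
    (hc : IsCompl Mp Mn) {lam : Module.Dual F 𝔥} (hl : weightSpace π lam ≠ ⊥) :
    weightSpace π lam ⊓ Mp ≠ ⊥ ∨ weightSpace π lam ⊓ Mn ≠ ⊥ := by
  obtain ⟨m, hm, hm0⟩ := Submodule.exists_mem_ne_zero_of_ne_bot hl
  obtain ⟨p, hpm, n, hnm, rfl⟩ := Submodule.mem_sup.1 (hc.sup_eq_top ▸ Submodule.mem_top : m ∈ Mp ⊔ Mn)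
  have key : ∀ x, π x p - lam x • p = 0 ∧ π x n - lam x • n = 0 := by
    intro x
    have hx := hm x
    rw [map_add, smul_add] at hx
    have e : π x p - lam x • p = -(π x n - lam x • n) := by
      rw [eq_neg_iff_add_eq_zero, ← sub_eq_zero.2 hx]; abel
    have h1 : π x p - lam x • p ∈ Mp := Mp.sub_mem (hp x p hpm) (Mp.smul_mem _ hpm)
    have h2 : π x n - lam x • n ∈ Mn := Mn.sub_mem (hn x n hnm) (Mn.smul_mem _ hnm)
    have h0 := Submodule.disjoint_def.1 hc.disjoint _ h1 (e ▸ Mn.neg_mem h2)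
    exact ⟨h0, neg_eq_zero.1 (e ▸ h0)⟩
  by_cases hp0 : p = 0
  · right
    refine (Submodule.ne_bot_iff _).2 ⟨n, ⟨fun x => sub_eq_zero.1 (key x).2, hnm⟩, ?_⟩
    rintro rfl
    simp [hp0] at hm0
  · left
    exact (Submodule.ne_bot_iff _).2 ⟨p, ⟨fun x => sub_eq_zero.1 (key x).1, hpm⟩, hp0⟩

/-- If every element of `Δ` takes the value `1` at `δ`, then on the `ℕ`-span of `Δ` evaluation at
`δ` is the sum of the coefficients, which vanishes only for the zero combination. -/
lemma closure_apply_eq_natCast {Δ : Set (Module.Dual F 𝔥)} {δ : 𝔥} (h : ∀ α ∈ Δ, α δ = 1)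
    {f : Module.Dual F 𝔥} (hf : f ∈ AddSubmonoid.closure Δ) :
    ∃ n : ℕ, f δ = n ∧ (n = 0 → f = 0) := by
  induction hf using AddSubmonoid.closure_induction with
  | mem x hx => exact ⟨1, by simp [h x hx], by simp⟩
  | zero => exact ⟨0, by simp, by simp⟩
  | add x y _ _ hx hy =>
    obtain ⟨a, ha, ha0⟩ := hx
    obtain ⟨b, hb, hb0⟩ := hy
    refine ⟨a + b, by simp [ha, hb], fun hab => ?_⟩
    rw [ha0 (by omega), hb0 (by omega), add_zero]

lemma exists_integral_of_decomposition [FiniteDimensional F 𝔥] (π : 𝔥 →ₗ[F] Module.End F M)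
    {𝔥₀ : Submodule F 𝔥} {Mp Mn : Submodule F M} {Δ : Set (Module.Dual F 𝔥₀)}
    (hp : ∀ x : 𝔥, ∀ m ∈ Mp, π x m ∈ Mp) (hn : ∀ x : 𝔥, ∀ m ∈ Mn, π x m ∈ Mn)
    (hc : IsCompl Mp Mn) (hli : LinearIndependent F ((↑) : Δ → Module.Dual F 𝔥₀))
    (hpos : ∀ lam : Module.Dual F 𝔥, weightSpace π lam ⊓ Mp ≠ ⊥ →
      lam ∘ₗ 𝔥₀.subtype ∈ AddSubmonoid.closure Δ ∧ lam ∘ₗ 𝔥₀.subtype ≠ 0)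
    (hneg : ∀ lam : Module.Dual F 𝔥, weightSpace π lam ⊓ Mn ≠ ⊥ →
      -(lam ∘ₗ 𝔥₀.subtype) ∈ AddSubmonoid.closure Δ ∧ lam ∘ₗ 𝔥₀.subtype ≠ 0) :
    ∃ δ : 𝔥, ∀ lam : Module.Dual F 𝔥, weightSpace π lam ≠ ⊥ →
      ∃ k : ℤ, k ≠ 0 ∧ lam δ = (k : F) := by
  have hli' : LinearIndepOn F id Δ := hli
  obtain ⟨Φ, hΦ⟩ := Module.exists_dual_forall_apply_eq_one hli'
  obtain ⟨δ, rfl⟩ := (Module.evalEquiv F 𝔥₀).surjective Φ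
  have hδ : ∀ α ∈ Δ, α δ = 1 := hΦ
  refine ⟨δ, fun lam hl => ?_⟩
  rcases weightSpace_inf_ne_bot π hp hn hc hl with h | h
  · obtain ⟨h1, h2⟩ := hpos lam h
    obtain ⟨n, hn, hn0⟩ := closure_apply_eq_natCast hδ h1
    exact ⟨n, fun h0 => h2 (hn0 (by exact_mod_cast h0)), by simpa using hn⟩
  · obtain ⟨h1, h2⟩ := hneg lam h
    obtain ⟨n, hn, hn0⟩ := closure_apply_eq_natCast hδ h1
    refine ⟨-n, fun h0 => h2 (neg_eq_zero.1 (hn0 (by simpa using h0))), ?_⟩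
    have : -(lam δ) = (n : F) := by simpa using hn
    simp [← this]

lemma exists_decomposition_of_integral [CharZero F] (π : 𝔥 →ₗ[F] Module.End F M)
    (hcomm : ∀ x y : 𝔥, Commute (π x) (π y))
    (hwt : (⨆ lam : Module.Dual F 𝔥, weightSpace π lam) = ⊤) {δ : 𝔥}
    (hδ : ∀ lam : Module.Dual F 𝔥, weightSpace π lam ≠ ⊥ → ∃ k : ℤ, k ≠ 0 ∧ lam δ = (k : F)) :
    ∃ (𝔥₀ : Submodule F 𝔥) (Mp Mn : Submodule F M) (Δ : Set (Module.Dual F ↥𝔥₀)),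
      (∀ x : 𝔥, ∀ m ∈ Mp, π x m ∈ Mp) ∧ (∀ x : 𝔥, ∀ m ∈ Mn, π x m ∈ Mn) ∧
      IsCompl Mp Mn ∧ LinearIndependent F ((↑) : Δ → Module.Dual F ↥𝔥₀) ∧
      (∀ lam : Module.Dual F 𝔥, weightSpace π lam ⊓ Mp ≠ ⊥ →
        lam ∘ₗ 𝔥₀.subtype ∈ AddSubmonoid.closure Δ ∧ lam ∘ₗ 𝔥₀.subtype ≠ 0) ∧
      (∀ lam : Module.Dual F 𝔥, weightSpace π lam ⊓ Mn ≠ ⊥ →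
        -(lam ∘ₗ 𝔥₀.subtype) ∈ AddSubmonoid.closure Δ ∧ lam ∘ₗ 𝔥₀.subtype ≠ 0) := by
  have hind : iSupIndep fun k : ℤ => (π δ).eigenspace (k : F) :=
    (π δ).eigenspaces_iSupIndep.comp (f := fun k : ℤ => (k : F)) Int.cast_injective
  have hinv : ∀ (s : Set ℤ) (x : 𝔥), ∀ m ∈ ⨆ k ∈ s, (π δ).eigenspace (k : F),
      π x m ∈ ⨆ k ∈ s, (π δ).eigenspace (k : F) := by
    intro s x
    change (⨆ k ∈ s, (π δ).eigenspace (k : F)) ≤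
      (⨆ k ∈ s, (π δ).eigenspace (k : F)).comap (π x)
    refine iSup₂_le fun k hk m hm => ?_
    have h1 : π x m ∈ (π δ).eigenspace (k : F) :=
      Module.End.mapsTo_genEigenspace_of_comm (hcomm δ x) (k : F) 1 hm
    exact Submodule.mem_iSup_of_mem k (Submodule.mem_iSup_of_mem hk h1)
  have hle : ∀ (s : Set ℤ) (lam : Module.Dual F 𝔥) (k : ℤ), lam δ = k → k ∈ s →
      weightSpace π lam ≤ ⨆ k ∈ s, (π δ).eigenspace (k : F) := by
    intro s lam k hk hs
    refine le_trans ?_ (le_iSup₂ (f := fun (k : ℤ) (_ : k ∈ s) => (π δ).eigenspace (k : F)) k hs)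
    exact hk ▸ weightSpace_le_eigenspace π lam δ
  have hdis : Disjoint (⨆ k ∈ Set.Ioi (0 : ℤ), (π δ).eigenspace (k : F))
      (⨆ k ∈ Set.Iio (0 : ℤ), (π δ).eigenspace (k : F)) :=
    hind.disjoint_biSup_biSup (Set.disjoint_left.2 fun a (ha : 0 < a) (hb : a < 0) => lt_asymm ha hb)
  have hsub : ∀ {f g : Module.Dual F (F ∙ δ)},
      f ⟨δ, Submodule.mem_span_singleton_self δ⟩ = g ⟨δ, Submodule.mem_span_singleton_self δ⟩ →
      f = g := by
    intro f g hfg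
    ext ⟨x, hx⟩
    obtain ⟨c, rfl⟩ := Submodule.mem_span_singleton.1 hx
    have e : (⟨c • δ, hx⟩ : (F ∙ δ)) = c • ⟨δ, Submodule.mem_span_singleton_self δ⟩ := rfl
    rw [e, map_smul, map_smul, hfg]
  -- `Δ` has exactly one element if `δ ≠ 0` and is empty if `δ = 0`.
  let Δ : Set (Module.Dual F (F ∙ δ)) :=
    {f | f ⟨δ, Submodule.mem_span_singleton_self δ⟩ = 1}
  have hmem : ∀ (f : Module.Dual F (F ∙ δ)) (n : ℕ), n ≠ 0 →
      f ⟨δ, Submodule.mem_span_singleton_self δ⟩ = n → f ∈ AddSubmonoid.closure Δ := by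
    intro f n hn hf
    have hn' : (n : F) ≠ 0 := by exact_mod_cast hn
    have h1 : (n : F)⁻¹ • f ∈ Δ := by
      change ((n : F)⁻¹ • f) _ = 1
      rw [LinearMap.smul_apply, hf, smul_eq_mul, inv_mul_cancel₀ hn']
    have h2 : f = n • ((n : F)⁻¹ • f) := by
      rw [← Nat.cast_smul_eq_nsmul F, smul_smul, mul_inv_cancel₀ hn', one_smul]
    rw [h2]
    exact nsmul_mem (AddSubmonoid.subset_closure h1) n
  refine ⟨F ∙ δ, _, _, Δ, hinv (Set.Ioi 0), hinv (Set.Iio 0), ⟨hdis, ?_⟩, ?_, ?_, ?_⟩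
  · rw [codisjoint_iff_le_sup, ← hwt]
    refine iSup_le fun lam => ?_
    by_cases hl : weightSpace π lam = ⊥
    · rw [hl]; exact bot_le
    obtain ⟨k, hk0, hk⟩ := hδ lam hl
    rcases lt_or_gt_of_ne hk0 with h | h
    · exact (hle (Set.Iio 0) lam k hk h).trans le_sup_right
    · exact (hle (Set.Ioi 0) lam k hk h).trans le_sup_left
  · have : Subsingleton Δ := ⟨fun a b => Subtype.ext (hsub (a.2.trans b.2.symm))⟩
    rw [linearIndependent_subsingleton_index_iff]
    rintro ⟨f, hf⟩ rfl
    exact zero_ne_one hf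
  · intro lam hl
    obtain ⟨k, hk0, hk⟩ := hδ lam fun h => hl (by rw [h, bot_inf_eq])
    have hkpos : 0 < k := by
      by_contra h
      have hlt : k ∈ Set.Iio (0 : ℤ) := lt_of_le_of_ne (not_lt.1 h) hk0
      exact hl (hdis.symm.mono_left (hle _ lam k hk hlt)).eq_bot
    lift k to ℕ using hkpos.le
    have hk' : (lam ∘ₗ (F ∙ δ).subtype) ⟨δ, Submodule.mem_span_singleton_self δ⟩ = (k : F) := by
      simpa using hk
    refine ⟨hmem _ k (by exact_mod_cast hk0) hk', fun h0 => hk0 ?_⟩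
    rw [h0] at hk'
    have h1 : (k : F) = 0 := hk'.symm
    exact_mod_cast h1
  · intro lam hl
    obtain ⟨k, hk0, hk⟩ := hδ lam fun h => hl (by rw [h, bot_inf_eq])
    have hkneg : k < 0 := by
      by_contra h
      have hlt : k ∈ Set.Ioi (0 : ℤ) := lt_of_le_of_ne (not_lt.1 h) hk0.symm
      exact hl (hdis.mono_left (hle _ lam k hk hlt)).eq_bot
    obtain ⟨n, rfl⟩ : ∃ n : ℕ, k = -n := ⟨k.natAbs, by omega⟩
    have hk' : (lam ∘ₗ (F ∙ δ).subtype) ⟨δ, Submodule.mem_span_singleton_self δ⟩ = -(n : F) := by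
      simpa using hk
    refine ⟨hmem _ n (by simpa using hk0) ?_, fun h0 => hk0 ?_⟩
    · rw [LinearMap.neg_apply, hk', neg_neg]
    · rw [h0] at hk'
      have : (n : F) = 0 := neg_eq_zero.1 hk'.symm
      simpa using this

lemma exists_integral_of_rational [CharZero F] [FiniteDimensional F 𝔥] {S : Set (Module.Dual F 𝔥)}
    (hS : S.Finite) {d : ℕ} (ψ : Module.Dual F 𝔥 →ₗ[F] (Fin d → F))
    (h : ∀ lam ∈ S, (∀ i : Fin d, ∃ qq : ℚ, ψ lam i = (qq : F)) ∧ ψ lam ≠ 0) :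
    ∃ δ : 𝔥, ∀ lam ∈ S, ∃ k : ℤ, k ≠ 0 ∧ lam δ = (k : F) := by
  have : Finite S := hS
  choose q hq using fun lam : S => (h lam lam.2).1
  have hq0 : ∀ lam, q lam ≠ 0 := fun lam h0 => (h lam lam.2).2 <| by
    ext i
    simp [hq, h0]
  obtain ⟨f, hf⟩ := Module.exists_dual_forall_apply_ne_zero (K := ℚ) q hq0
  obtain ⟨b, hb⟩ := IsLocalization.exist_integer_multiples_of_finite (nonZeroDivisors ℤ)
    fun lam : S => f (q lam)
  -- The functional `b • f`, extended to `F^d` and pulled back along `ψ`.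
  let Φ : Module.Dual F (Module.Dual F 𝔥) :=
    (((b : ℤ) : F) • ∑ i, ((f (Pi.single i 1) : ℚ) : F) • LinearMap.proj i) ∘ₗ ψ
  refine ⟨(Module.evalEquiv F 𝔥).symm Φ, fun lam hl => ?_⟩
  obtain ⟨k, hk⟩ := hb ⟨lam, hl⟩
  have hk' : (k : ℚ) = (b : ℤ) * f (q ⟨lam, hl⟩) := by simpa using hk
  refine ⟨k, ?_, ?_⟩
  · rintro rfl
    have hb0 : ((b : ℤ) : ℚ) ≠ 0 := by exact_mod_cast nonZeroDivisors.ne_zero b.2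
    exact mul_ne_zero hb0 (hf ⟨lam, hl⟩) (by simpa using hk'.symm)
  · have e : f (q ⟨lam, hl⟩) = ∑ i, f (Pi.single i 1) * q ⟨lam, hl⟩ i := by
      conv_lhs => rw [LinearMap.pi_apply_eq_sum_univ f (q ⟨lam, hl⟩)]
      refine Finset.sum_congr rfl fun i _ => ?_
      rw [smul_eq_mul, mul_comm]
      congr 2
      ext j
      simp [Pi.single_apply, eq_comm]
    have hkF : (k : F) = (((k : ℚ)) : F) := by simp
    rw [hkF, hk', e]
    simp [Φ, fun i => hq ⟨lam, hl⟩ i]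

lemma exists_rational_of_integral [FiniteDimensional F 𝔥] {S : Set (Module.Dual F 𝔥)} {δ : 𝔥}
    (hδ : ∀ lam ∈ S, ∃ k : ℤ, k ≠ 0 ∧ lam δ = (k : F)) [CharZero F] :
    ∃ (d : ℕ) (K : Submodule F (Module.Dual F 𝔥))
      (ψ : (Module.Dual F 𝔥 ⧸ K) ≃ₗ[F] (Fin d → F)), ∀ lam ∈ S,
        (∀ i : Fin d, ∃ qq : ℚ, ψ (Submodule.Quotient.mk lam) i = (qq : F)) ∧
          ψ (Submodule.Quotient.mk lam) ≠ 0 := by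
  by_cases h0 : δ = 0
  · -- No functional is nonzero at `δ = 0`, so `S` is empty and any `ψ` will do.
    refine ⟨_, ⊥, (Module.finBasis F _).equivFun, fun lam hl => ?_⟩
    obtain ⟨k, hk0, hk⟩ := hδ lam hl
    rw [h0, map_zero, eq_comm, Int.cast_eq_zero] at hk
    exact absurd hk hk0
  · have hs : Function.Surjective (Module.Dual.eval F 𝔥 δ) :=
      LinearMap.surjective fun h => h0 ((Module.eval_apply_eq_zero_iff F δ).1 h)
    refine ⟨1, _, (LinearMap.quotKerEquivOfSurjective _ hs).trans
      (LinearEquiv.funUnique (Fin 1) F F).symm, fun lam hl => ?_⟩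
    obtain ⟨k, hk0, hk⟩ := hδ lam hl
    have e : ∀ i, ((LinearMap.quotKerEquivOfSurjective _ hs).trans
      (LinearEquiv.funUnique (Fin 1) F F).symm) (Submodule.Quotient.mk lam) i = (k : F) :=
      fun _ => hk
    refine ⟨fun i => ⟨k, by rw [e]; simp⟩, fun h => hk0 ?_⟩
    have h1 := e 0
    rw [h] at h1
    exact Int.cast_eq_zero.1 h1.symm

end Duflo

/-- Equivalent criteria for a triangular-type decomposition of a finite-dimensional weight
module `M` (with `M₀ = 0`) over a finite-dimensional abelian Lie algebra `𝔥` over a field of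
characteristic zero: (1) existence of a subspace `𝔥₀ ⊆ 𝔥`, a decomposition `M = M⁺ ⊕ M⁻`
into submodules and a linearly independent set `Δ′ ⊆ 𝔥₀*` such that weights of `M⁺` (resp.
`M⁻`) restrict on `𝔥₀` to nonzero elements of `ℕΔ′` (resp. `−ℕΔ′`); (2) existence of a
codimension-`d` subspace `K ⊆ 𝔥*` and an isomorphism `ψ : 𝔥*/K ≅ F^d` taking every weight
of `M` into `ℚ^d \ {0}`; (3) existence of `δ ∈ 𝔥` with `λ(δ) ∈ ℤ \ {0}` for every weight
`λ` of `M`. -/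
theorem duflo_criteria_equiv (F 𝔥 M : Type*) [Field F] [CharZero F]
    [AddCommGroup 𝔥] [Module F 𝔥] [FiniteDimensional F 𝔥]
    [AddCommGroup M] [Module F M] [FiniteDimensional F M]
    (π : 𝔥 →ₗ[F] Module.End F M)
    (hcomm : ∀ x y : 𝔥, Commute (π x) (π y))
    (hwt : (⨆ lam : Module.Dual F 𝔥, weightSpace π lam) = ⊤)
    (hzero : weightSpace π (0 : Module.Dual F 𝔥) = ⊥) :
    ((∃ (𝔥₀ : Submodule F 𝔥) (Mp Mn : Submodule F M)
        (Δ : Set (Module.Dual F ↥𝔥₀)),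
        (∀ x : 𝔥, ∀ m ∈ Mp, π x m ∈ Mp) ∧
        (∀ x : 𝔥, ∀ m ∈ Mn, π x m ∈ Mn) ∧
        IsCompl Mp Mn ∧
        LinearIndependent F ((↑) : Δ → Module.Dual F ↥𝔥₀) ∧
        (∀ lam : Module.Dual F 𝔥, weightSpace π lam ⊓ Mp ≠ ⊥ →
          lam ∘ₗ 𝔥₀.subtype ∈ AddSubmonoid.closure Δ ∧ lam ∘ₗ 𝔥₀.subtype ≠ 0) ∧
        (∀ lam : Module.Dual F 𝔥, weightSpace π lam ⊓ Mn ≠ ⊥ →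
          -(lam ∘ₗ 𝔥₀.subtype) ∈ AddSubmonoid.closure Δ ∧ lam ∘ₗ 𝔥₀.subtype ≠ 0))
      ↔ (∃ δ : 𝔥, ∀ lam : Module.Dual F 𝔥, weightSpace π lam ≠ ⊥ →
          ∃ k : ℤ, k ≠ 0 ∧ lam δ = (k : F))) ∧
    ((∃ (d : ℕ) (K : Submodule F (Module.Dual F 𝔥))
        (ψ : (Module.Dual F 𝔥 ⧸ K) ≃ₗ[F] (Fin d → F)),
        ∀ lam : Module.Dual F 𝔥, weightSpace π lam ≠ ⊥ →
          (∀ i : Fin d, ∃ qq : ℚ, ψ (Submodule.Quotient.mk lam) i = (qq : F)) ∧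
          ψ (Submodule.Quotient.mk lam) ≠ 0)
      ↔ (∃ δ : 𝔥, ∀ lam : Module.Dual F 𝔥, weightSpace π lam ≠ ⊥ →
          ∃ k : ℤ, k ≠ 0 ∧ lam δ = (k : F))) := by
  refine ⟨⟨?_, ?_⟩, ?_, ?_⟩
  · rintro ⟨𝔥₀, Mp, Mn, Δ, hp, hn, hc, hli, hpos, hneg⟩
    exact exists_integral_of_decomposition π hp hn hc hli hpos hneg
  · rintro ⟨δ, hδ⟩
    exact exists_decomposition_of_integral π hcomm hwt hδ
  · rintro ⟨d, K, ψ, h⟩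
    exact exists_integral_of_rational (finite_weights π hcomm) (ψ.toLinearMap ∘ₗ K.mkQ) h
  · rintro ⟨δ, hδ⟩
    exact exists_rational_of_integral (S := {lam | weightSpace π lam ≠ ⊥}) hδ
end
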